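/- arXiv:1404.4591 — 8 statements merged into one kernel-verified Lean document; each statement's English description precedes it below -/
import Mathlib

section
/- For every real p ≥ 1: ∫_ℝ Q_p(x)^{p+2} dx = (2(p+2)/(p+4)) · ∫_ℝ Q_p(x)² dx, and ∫_ℝ Q_p'(x)² dx = (p/(p+4)) · ∫_ℝ Q_p(x)² dx. -/
/-!
Up to a constant factor and a rescaling of the variable, `Q_p ^ q` is a negative power of `cosh`.
Integrating the derivative of `sinh * cosh ^ (r - 1)` over the line gives the Wallis-type recurrence
`∫ cosh ^ (r - 2) = r / (r - 1) * ∫ cosh ^ r` for `r < 0`, which relates `∫ Q_p ^ (p + q)` to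
`∫ Q_p ^ q`; the case `q = 2` is the first identity. The second one follows by integrating the
conservation law `Q_p' ^ 2 = Q_p ^ 2 - 2 / (p + 2) * Q_p ^ (p + 2)`.
-/

open Real MeasureTheory

/-- The soliton profile `Q_p(x) = ((p+2)/2)^(1/p) * (cosh (p*x/2))^(-2/p)`. -/
noncomputable def solitonQ (p : ℝ) (x : ℝ) : ℝ :=
  ((p + 2) / 2) ^ (1 / p) * (Real.cosh (p * x / 2)) ^ (-(2 / p))

lemma continuous_cosh_rpow (r : ℝ) : Continuous fun x => cosh x ^ r :=
  continuous_cosh.rpow_const fun x => Or.inl (cosh_pos x).ne'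

lemma integrable_cosh_rpow {r : ℝ} (hr : r < 0) : Integrable fun x => cosh x ^ r := by
  have hbound (x : ℝ) : cosh x ^ r ≤ (1 / 2) ^ r * exp (r * x) := calc
    cosh x ^ r ≤ (1 / 2 * exp x) ^ r :=
      rpow_le_rpow_of_nonpos (by positivity)
        (by rw [cosh_eq]; linarith [exp_pos (-x)]) hr.le
    _ = (1 / 2) ^ r * exp (r * x) := by
      rw [mul_rpow (by norm_num) (exp_pos x).le, ← exp_mul, mul_comm x]
  have hloc := (continuous_cosh_rpow r).locallyIntegrable (μ := volume)
  refine hloc.integrable_of_isBigO_atTop_of_norm_isNegInvariant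
    (.of_forall fun x => by simp) (.of_bound ((1 / 2) ^ r) (.of_forall fun x => ?_))
    ⟨Set.Ioi 0, Filter.Ioi_mem_atTop 0, integrableOn_exp_mul_Ioi hr 0⟩
  simpa only [norm_of_nonneg (rpow_nonneg (cosh_pos x).le r), norm_of_nonneg (exp_pos _).le]
    using hbound x

lemma hasDerivAt_sinh_mul_cosh_rpow (r x : ℝ) :
    HasDerivAt (fun y => sinh y * cosh y ^ (r - 1))
      (r * cosh x ^ r - (r - 1) * cosh x ^ (r - 2)) x := by
  have hc := cosh_pos x
  refine ((hasDerivAt_sinh x).mul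
    ((hasDerivAt_cosh x).rpow_const (p := r - 1) (Or.inl hc.ne'))).congr_deriv ?_
  rw [sub_sub, one_add_one_eq_two, rpow_sub_one hc.ne', rpow_sub hc, rpow_two]
  field_simp
  rw [sinh_sq]
  ring

lemma integrable_sinh_mul_cosh_rpow {r : ℝ} (hr : r < 0) :
    Integrable fun x => sinh x * cosh x ^ (r - 1) := by
  have hcont : Continuous fun x => sinh x * cosh x ^ (r - 1) :=
    continuous_sinh.mul (continuous_cosh_rpow (r - 1))
  refine (integrable_cosh_rpow hr).mono' hcont.aestronglyMeasurable (.of_forall fun x => ?_)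
  have hc := cosh_pos x
  calc ‖sinh x * cosh x ^ (r - 1)‖ = |tanh x| * cosh x ^ r := by
        rw [rpow_sub_one hc.ne', mul_div_left_comm, ← tanh_eq_sinh_div_cosh, mul_comm, norm_mul,
          norm_eq_abs, norm_of_nonneg (rpow_nonneg hc.le r)]
    _ ≤ cosh x ^ r :=
        mul_le_of_le_one_left (rpow_nonneg hc.le r) (abs_tanh_lt_one x).le

lemma integral_cosh_rpow_sub_two {r : ℝ} (hr : r < 0) :
    ∫ x, cosh x ^ (r - 2) = r / (r - 1) * ∫ x, cosh x ^ r := by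
  have hint := (integrable_cosh_rpow hr).const_mul r
  have hint' := (integrable_cosh_rpow (show r - 2 < 0 by linarith)).const_mul (r - 1)
  have hzero : r * (∫ x, cosh x ^ r) - (r - 1) * ∫ x, cosh x ^ (r - 2) = 0 := by
    rw [← integral_const_mul, ← integral_const_mul, ← integral_sub hint hint']
    exact integral_eq_zero_of_hasDerivAt_of_integrable (hasDerivAt_sinh_mul_cosh_rpow r)
      (hint.sub hint') (integrable_sinh_mul_cosh_rpow hr)
  have hr1 : r - 1 ≠ 0 := by linarith
  field_simp
  linarith

lemma solitonQ_pos {p : ℝ} (hp : -2 < p) (x : ℝ) : 0 < solitonQ p x :=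
  mul_pos (rpow_pos_of_pos (by linarith) _) (rpow_pos_of_pos (cosh_pos _) _)

lemma solitonQ_rpow {p : ℝ} (hp : -2 ≤ p) (q x : ℝ) :
    solitonQ p x ^ q = ((p + 2) / 2) ^ (q / p) * cosh (p / 2 * x) ^ (-(2 * q / p)) := by
  have hb : 0 ≤ (p + 2) / 2 := by linarith
  have hc := (cosh_pos (p * x / 2)).le
  rw [solitonQ, mul_rpow (rpow_nonneg hb _) (rpow_nonneg hc _), ← rpow_mul hb, ← rpow_mul hc,
    one_div_mul_eq_div, neg_mul, div_mul_eq_mul_div, mul_div_right_comm p]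

lemma solitonQ_rpow_self {p : ℝ} (hp : -2 ≤ p) (hp0 : p ≠ 0) (x : ℝ) :
    solitonQ p x ^ p = (p + 2) / 2 / cosh (p / 2 * x) ^ 2 := by
  rw [solitonQ_rpow hp, div_self hp0, mul_div_cancel_right₀ _ hp0, rpow_one,
    rpow_neg (cosh_pos _).le, rpow_two, ← div_eq_mul_inv]

lemma hasDerivAt_solitonQ {p : ℝ} (hp : p ≠ 0) (x : ℝ) :
    HasDerivAt (solitonQ p) (-(tanh (p / 2 * x) * solitonQ p x)) x := by
  have hc := (cosh_pos (p * x / 2)).ne'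
  have hlin : HasDerivAt (fun y => p * y / 2) (p / 2) x := by
    simpa using ((hasDerivAt_id x).const_mul p).div_const 2
  refine ((hlin.cosh.rpow_const (p := -(2 / p)) (Or.inl hc)).const_mul
    (((p + 2) / 2) ^ (1 / p))).congr_deriv ?_
  rw [rpow_sub_one hc, tanh_eq_sinh_div_cosh, solitonQ, ← mul_div_right_comm]
  field_simp

lemma deriv_solitonQ_sq {p : ℝ} (hp : -2 < p) (hp0 : p ≠ 0) (x : ℝ) :
    deriv (solitonQ p) x ^ 2 = solitonQ p x ^ 2 - 2 / (p + 2) * solitonQ p x ^ (p + 2) := by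
  have hp2 : p + 2 ≠ 0 := by linarith
  rw [(hasDerivAt_solitonQ hp0 x).deriv, rpow_add (solitonQ_pos hp x), rpow_two,
    solitonQ_rpow_self hp.le hp0, tanh_eq_sinh_div_cosh]
  field_simp
  rw [sinh_sq]
  ring

lemma integrable_solitonQ_rpow {p q : ℝ} (hp : 0 < p) (hq : 0 < q) :
    Integrable fun x => solitonQ p x ^ q := by
  simp_rw [solitonQ_rpow (show -2 ≤ p by linarith)]
  have hr : -(2 * q / p) < 0 := neg_neg_of_pos (by positivity)
  exact ((integrable_cosh_rpow hr).comp_mul_left' (half_pos hp).ne').const_mul _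

lemma integral_solitonQ_rpow_add {p q : ℝ} (hp : 0 < p) (hq : 0 < q) :
    ∫ x, solitonQ p x ^ (p + q) = q * (p + 2) / (p + 2 * q) * ∫ x, solitonQ p x ^ q := by
  have hp2 : -2 < p := by linarith
  have hr : -(2 * q / p) < 0 := neg_neg_of_pos (by positivity)
  have hpow (x : ℝ) : solitonQ p x ^ (p + q) =
      (p + 2) / 2 * (((p + 2) / 2) ^ (q / p) * cosh (p / 2 * x) ^ (-(2 * q / p) - 2)) := by
    rw [rpow_add (solitonQ_pos hp2 x), solitonQ_rpow_self hp2.le hp.ne', solitonQ_rpow hp2.le,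
      rpow_sub (cosh_pos _), rpow_two]
    ring
  simp_rw [hpow, solitonQ_rpow hp2.le, integral_const_mul]
  rw [Measure.integral_comp_mul_left fun y => cosh y ^ (-(2 * q / p) - 2),
    Measure.integral_comp_mul_left fun y => cosh y ^ (-(2 * q / p)),
    integral_cosh_rpow_sub_two hr, smul_eq_mul, smul_eq_mul]
  have hcoeff : (p + 2) / 2 * (-(2 * q / p) / (-(2 * q / p) - 1)) =
      q * (p + 2) / (p + 2 * q) := by
    rw [← neg_add', div_neg, neg_div, neg_neg]
    field_simp
    ring
  rw [← hcoeff]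
  ring

theorem soliton_norm_identities_general (p : ℝ) (hp : 0 < p) :
    (∫ x : ℝ, (solitonQ p x) ^ (p + 2))
      = (2 * (p + 2) / (p + 4)) * ∫ x : ℝ, (solitonQ p x) ^ 2 ∧
    (∫ x : ℝ, (deriv (solitonQ p) x) ^ 2)
      = (p / (p + 4)) * ∫ x : ℝ, (solitonQ p x) ^ 2 := by
  have hpow : ∫ x, solitonQ p x ^ (p + 2) =
      2 * (p + 2) / (p + 4) * ∫ x, solitonQ p x ^ 2 := by
    simpa only [rpow_two, show (2 : ℝ) * 2 = 4 by norm_num] using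
      integral_solitonQ_rpow_add hp two_pos
  have hsq : Integrable fun x => solitonQ p x ^ 2 := by
    simpa only [rpow_two] using integrable_solitonQ_rpow hp two_pos
  have hint : Integrable fun x => solitonQ p x ^ (p + 2) :=
    integrable_solitonQ_rpow hp (by positivity)
  refine ⟨hpow, ?_⟩
  simp_rw [deriv_solitonQ_sq (show -2 < p by linarith) hp.ne']
  rw [integral_sub hsq (hint.const_mul _), integral_const_mul, hpow]
  field_simp
  ring

theorem soliton_norm_identities (p : ℝ) (hp : 1 ≤ p) :
    (∫ x : ℝ, (solitonQ p x) ^ (p + 2))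
      = (2 * (p + 2) / (p + 4)) * ∫ x : ℝ, (solitonQ p x) ^ 2 ∧
    (∫ x : ℝ, (deriv (solitonQ p) x) ^ 2)
      = (p / (p + 4)) * ∫ x : ℝ, (solitonQ p x) ^ 2 :=
  soliton_norm_identities_general p (zero_lt_one.trans_le hp)
end

section
/- For the L²-critical exponent p = 4 (so that Q_4(x) = 3^{1/4}·(cosh(2x))^{−1/2}), the following hold: ∫_ℝ Q_4(x) dx = 3072^{1/4} · Γ(5/4)² / √π, ∫_ℝ Q_4(x)² dx = (√3/2)·π, and consequently (∫_ℝ Q_4 dx)² / (∫_ℝ Q_4² dx) = Γ(1/4)^4 / (4π²). -/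
/-!
The logistic function `σ` maps `ℝ` onto `(0, 1)` with derivative `σ(x) σ(-x)`, so it turns the Beta
integral `∫ t^(a-1) (1-t)^(b-1) dt` into `∫ σ(x)^a σ(-x)^b dx`. Since `σ(x) σ(-x)` is the inverse
square of `2 cosh(x/2)`, the case `a = b` evaluates `∫ cosh^(-2a)`, and a rescaling gives the
integral of every positive power of every soliton profile.
-/

open Real MeasureTheory

open ProbabilityTheory (beta beta_eq_betaIntegralReal)

section Beta

variable {a b : ℝ}

theorem integral_Ioo_rpow_mul_one_sub_rpow (ha : 0 < a) (hb : 0 < b) :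
    ∫ t in Set.Ioo (0 : ℝ) 1, t ^ (a - 1) * (1 - t) ^ (b - 1) = beta a b := by
  have cast_integrand : ∀ t ∈ Set.Ioo (0 : ℝ) 1,
      (t : ℂ) ^ ((a : ℂ) - 1) * (1 - (t : ℂ)) ^ ((b : ℂ) - 1)
        = ((t ^ (a - 1) * (1 - t) ^ (b - 1) : ℝ) : ℂ) := fun t ht ↦ by
    simp [Complex.ofReal_cpow ht.1.le, Complex.ofReal_cpow (sub_nonneg.2 ht.2.le)]
  rw [beta_eq_betaIntegralReal a b ha hb, Complex.betaIntegral,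
    intervalIntegral.integral_of_le zero_le_one, integral_Ioc_eq_integral_Ioo,
    setIntegral_congr_fun measurableSet_Ioo cast_integrand, integral_complex_ofReal,
    Complex.ofReal_re]

theorem integral_Ioo_eq_integral_sigmoid {E : Type*} [NormedAddCommGroup E] [NormedSpace ℝ E]
    (g : ℝ → E) :
    ∫ t in Set.Ioo (0 : ℝ) 1, g t = ∫ x, (sigmoid x * sigmoid (-x)) • g (sigmoid x) := by
  simp_rw [← range_sigmoid, ← Set.image_univ, sigmoid_neg]
  rw [integral_image_eq_integral_deriv_smul_of_monotoneOn MeasurableSet.univ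
    (fun x _ ↦ (hasDerivAt_sigmoid x).hasDerivWithinAt) (sigmoid_monotone.monotoneOn _),
    setIntegral_univ]

theorem integral_sigmoid_rpow_mul_sigmoid_neg_rpow (ha : 0 < a) (hb : 0 < b) :
    ∫ x, sigmoid x ^ a * sigmoid (-x) ^ b = beta a b := by
  rw [← integral_Ioo_rpow_mul_one_sub_rpow ha hb, integral_Ioo_eq_integral_sigmoid]
  congr! 2 with x
  rw [← sigmoid_neg, rpow_sub_one (sigmoid_pos x).ne', rpow_sub_one (sigmoid_pos (-x)).ne',
    smul_eq_mul, mul_mul_mul_comm, mul_div_cancel₀ _ (sigmoid_pos x).ne',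
    mul_div_cancel₀ _ (sigmoid_pos (-x)).ne']

end Beta

theorem sigmoid_mul_sigmoid_neg (x : ℝ) :
    sigmoid x * sigmoid (-x) = ((2 * cosh (x / 2)) ^ 2)⁻¹ := by
  have exp_eq_sq : exp x = exp (x / 2) ^ 2 := by rw [← exp_nat_mul]; ring_nf
  rw [sigmoid_def, sigmoid_def, ← mul_inv, neg_neg, cosh_eq, exp_neg, exp_neg, exp_eq_sq]
  field_simp
  ring

theorem sigmoid_two_mul_rpow_mul_sigmoid_neg_rpow (a x : ℝ) :
    sigmoid (2 * x) ^ a * sigmoid (-(2 * x)) ^ a = 4 ^ (-a) * cosh x ^ (-(2 * a)) := by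
  have hcosh := cosh_pos x
  rw [← mul_rpow (sigmoid_nonneg _) (sigmoid_nonneg _), sigmoid_mul_sigmoid_neg,
    mul_div_cancel_left₀ x two_ne_zero, inv_rpow (by positivity), ← rpow_neg (by positivity),
    mul_pow, mul_rpow (by positivity) (by positivity), ← rpow_natCast_mul hcosh.le]
  norm_num

theorem integral_cosh_rpow {a : ℝ} (ha : 0 < a) :
    ∫ x, cosh x ^ (-(2 * a)) = 4 ^ a / 2 * beta a a := by
  have rescaled : ∫ x, sigmoid (2 * x) ^ a * sigmoid (-(2 * x)) ^ a = 2⁻¹ * beta a a := by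
    rw [Measure.integral_comp_mul_left (fun x ↦ sigmoid x ^ a * sigmoid (-x) ^ a),
      integral_sigmoid_rpow_mul_sigmoid_neg_rpow ha ha]
    norm_num
  simp_rw [sigmoid_two_mul_rpow_mul_sigmoid_neg_rpow] at rescaled
  rw [integral_const_mul, rpow_neg (by norm_num), inv_mul_eq_iff_eq_mul₀ (by positivity)]
    at rescaled
  rw [rescaled]
  ring

theorem integral_solitonQ_rpow {p q : ℝ} (hp : 0 < p) (hq : 0 < q) :
    ∫ x, solitonQ p x ^ q = (2 * p + 4) ^ (q / p) / p * beta (q / p) (q / p) := by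
  have solitonQ_rpow (x : ℝ) : solitonQ p x ^ q
      = ((p + 2) / 2) ^ (q / p) * cosh (p / 2 * x) ^ (-(2 * (q / p))) := by
    have hcosh := cosh_pos (p * x / 2)
    rw [solitonQ, mul_rpow (by positivity) (by positivity), ← rpow_mul (by positivity),
      ← rpow_mul hcosh.le]
    ring_nf
  have base_mul_four : (2 * p + 4 : ℝ) = (p + 2) / 2 * 4 := by ring
  simp_rw [solitonQ_rpow]
  rw [integral_const_mul, Measure.integral_comp_mul_left (fun x ↦ cosh x ^ (-(2 * (q / p)))),
    integral_cosh_rpow (div_pos hq hp), abs_of_pos (by positivity), base_mul_four,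
    mul_rpow (by positivity) (by positivity), smul_eq_mul]
  field_simp

theorem beta_half_half : beta (1 / 2) (1 / 2) = π := by
  rw [beta, Gamma_one_half_eq, mul_self_sqrt pi_pos.le]
  norm_num

theorem beta_quarter_quarter : beta (1 / 4) (1 / 4) = Gamma (1 / 4) ^ 2 / √π := by
  rw [beta, ← Gamma_one_half_eq]
  norm_num [sq]

theorem integral_solitonQ_four :
    ∫ x, solitonQ 4 x = 12 ^ (1 / 4 : ℝ) / 4 * (Gamma (1 / 4) ^ 2 / √π) := by
  have h := integral_solitonQ_rpow four_pos one_pos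
  simp_rw [rpow_one] at h
  rw [h, beta_quarter_quarter, show (2 * 4 + 4 : ℝ) = 12 by norm_num]

theorem sqrt_twelve : √12 = 2 * √3 := by
  rw [show (12 : ℝ) = 2 ^ 2 * 3 by norm_num, sqrt_mul (by positivity), sqrt_sq zero_le_two]

theorem integral_solitonQ_four_sq : ∫ x, solitonQ 4 x ^ 2 = √3 / 2 * π := by
  have h := integral_solitonQ_rpow four_pos two_pos
  simp_rw [rpow_two] at h
  rw [h, show (2 / 4 : ℝ) = 1 / 2 by norm_num, beta_half_half, ← sqrt_eq_rpow,
    show (2 * 4 + 4 : ℝ) = 12 by norm_num, sqrt_twelve]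
  ring

theorem Gamma_five_fourths : Gamma (5 / 4) = 1 / 4 * Gamma (1 / 4) := by
  rw [← Gamma_add_one (by norm_num)]
  norm_num

theorem critical_soliton_integrals :
    (∫ x : ℝ, solitonQ 4 x)
        = (3072 : ℝ) ^ ((1 : ℝ) / 4) * Real.Gamma (5 / 4) ^ 2 / Real.sqrt π ∧
    (∫ x : ℝ, (solitonQ 4 x) ^ 2) = (Real.sqrt 3 / 2) * π ∧
    (∫ x : ℝ, solitonQ 4 x) ^ 2 / (∫ x : ℝ, (solitonQ 4 x) ^ 2)
        = Real.Gamma (1 / 4) ^ 4 / (4 * π ^ 2) := by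
  have rpow_3072 : (3072 : ℝ) ^ (1 / 4 : ℝ) = 12 ^ (1 / 4 : ℝ) * 4 := by
    rw [show (3072 : ℝ) = 12 * 4 ^ (4 : ℝ) by norm_num, mul_rpow (by norm_num) (by norm_num),
      ← rpow_mul (by norm_num)]
    norm_num
  have rpow_twelve_sq : ((12 : ℝ) ^ (1 / 4 : ℝ)) ^ 2 = 2 * √3 := by
    rw [← sqrt_twelve, sqrt_eq_rpow, ← rpow_mul_natCast (by norm_num)]
    norm_num
  refine ⟨?_, integral_solitonQ_four_sq, ?_⟩
  · rw [integral_solitonQ_four, Gamma_five_fourths, rpow_3072]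
    ring
  · rw [integral_solitonQ_four, integral_solitonQ_four_sq, mul_pow, div_pow, div_pow,
      rpow_twelve_sq, sq_sqrt pi_pos.le]
    field_simp
    norm_num
end

section
/- For every real γ > −1, the function Hi_γ is differentiable on ℝ and its derivative is Hi_γ'(x) = Hi_{γ+1}(x) for all x ∈ ℝ; consequently Hi_γ is infinitely differentiable, with k-th derivative Hi_{γ+k}. -/
/-!
The function `Hi_γ` is the moment generating function of the measure `(1/π) σ^γ exp(-σ³/3) dσ` on
`(0, ∞)`. By Young's inequality the cubic absorbs every linear term `σx`, so this measure has
exponential moments of all real orders and its moment generating function is analytic on `ℝ`.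
The `k`-th derivative inserts the factor `σ^k` into the integrand, which shifts `γ` to `γ + k`.
-/

open Real MeasureTheory

/-- The generalized Scorer function `Hi_γ(x) = (1/π) ∫_0^∞ σ^γ exp(-σ³/3 + σx) dσ`. -/
noncomputable def scorerHi (γ : ℝ) (x : ℝ) : ℝ :=
  (1 / π) * ∫ σ in Set.Ioi (0 : ℝ), σ ^ γ * Real.exp (-σ ^ 3 / 3 + σ * x)

open Set ProbabilityTheory

lemma exists_forall_mul_le_mul_rpow_add {p b : ℝ} (hp : 1 < p) (hb : 0 < b) (x : ℝ) :
    ∃ C, ∀ σ, 0 ≤ σ → x * σ ≤ b * σ ^ p + C := by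
  have hp₀ : 0 < p := one_pos.trans hp
  -- The scale at which `(c * σ) ^ p / p = b * σ ^ p` in Young's inequality.
  set c : ℝ := (b * p) ^ p⁻¹
  have hc : 0 < c := by positivity
  have hcp : c ^ p = b * p := rpow_inv_rpow (by positivity) hp₀.ne'
  let q := p.conjExponent
  refine ⟨|x / c| ^ q / q, fun σ hσ ↦ ?_⟩
  calc x * σ = c * σ * (x / c) := by field_simp
    _ ≤ |c * σ| ^ p / p + |x / c| ^ q / q := young_inequality _ _ (.conjExponent hp)
    _ = b * σ ^ p + |x / c| ^ q / q := by
      rw [abs_of_nonneg (by positivity), mul_rpow hc.le hσ, hcp]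
      field_simp

lemma integrableOn_rpow_mul_exp_neg_mul_rpow_add_mul {s p b : ℝ} (hs : -1 < s) (hp : 1 < p)
    (hb : 0 < b) (x : ℝ) :
    IntegrableOn (fun σ : ℝ ↦ σ ^ s * exp (-b * σ ^ p + x * σ)) (Ioi 0) := by
  obtain ⟨C, hC⟩ := exists_forall_mul_le_mul_rpow_add hp (half_pos hb) x
  have hdom : IntegrableOn (fun σ : ℝ ↦ exp C * (σ ^ s * exp (-(b / 2) * σ ^ p))) (Ioi 0) :=
    (integrableOn_rpow_mul_exp_neg_mul_rpow hs (one_pos.trans hp) (half_pos hb)).const_mul _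
  refine hdom.mono' (by fun_prop) ?_
  filter_upwards [ae_restrict_mem measurableSet_Ioi] with σ (hσ : 0 < σ)
  calc ‖σ ^ s * exp (-b * σ ^ p + x * σ)‖ = σ ^ s * exp (-b * σ ^ p + x * σ) :=
        norm_of_nonneg (by positivity)
    _ ≤ σ ^ s * exp (C + -(b / 2) * σ ^ p) := by
      gcongr σ ^ s * exp ?_
      linarith [hC σ hσ.le]
    _ = exp C * (σ ^ s * exp (-(b / 2) * σ ^ p)) := by rw [exp_add, mul_left_comm]

/-- The measure `(1/π) σ^γ exp(-σ³/3) dσ` on `(0, ∞)`. The factor `1/π` is included so that its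
moment generating function is exactly `scorerHi γ`. -/
noncomputable def scorerMeasure (γ : ℝ) : Measure ℝ :=
  (volume.restrict (Ioi 0)).withDensity
    fun σ ↦ ENNReal.ofReal (1 / π * (σ ^ γ * exp (-σ ^ 3 / 3)))

section VectorValued

variable {E : Type*} [NormedAddCommGroup E] [NormedSpace ℝ E]

lemma integral_scorerMeasure (γ : ℝ) (f : ℝ → E) :
    ∫ σ, f σ ∂scorerMeasure γ = (1 / π) • ∫ σ in Ioi 0, (σ ^ γ * exp (-σ ^ 3 / 3)) • f σ := by
  rw [scorerMeasure, integral_withDensity_eq_integral_toReal_smul (by fun_prop) (by simp),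
    ← integral_smul]
  refine setIntegral_congr_fun measurableSet_Ioi fun σ (hσ : 0 < σ) ↦ ?_
  simp only [smul_smul]
  rw [ENNReal.toReal_ofReal (by positivity)]

lemma integrable_scorerMeasure_iff {γ : ℝ} {f : ℝ → E} :
    Integrable f (scorerMeasure γ) ↔
      IntegrableOn (fun σ ↦ (σ ^ γ * exp (-σ ^ 3 / 3)) • f σ) (Ioi 0) := by
  rw [scorerMeasure, integrable_withDensity_iff_integrable_smul' (by fun_prop) (by simp),
    IntegrableOn, ← integrable_fun_smul_iff (one_div_ne_zero pi_ne_zero) fun σ ↦ (σ ^ γ * _) • f σ]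
  refine integrableOn_congr_fun (fun σ (hσ : 0 < σ) ↦ ?_) measurableSet_Ioi
  simp only [smul_smul]
  rw [ENNReal.toReal_ofReal (by positivity)]

end VectorValued

lemma integral_pow_mul_exp_scorerMeasure (γ x : ℝ) (k : ℕ) :
    ∫ σ, σ ^ k * exp (x * σ) ∂scorerMeasure γ = scorerHi (γ + k) x := by
  rw [integral_scorerMeasure, scorerHi]
  congr 1
  refine setIntegral_congr_fun measurableSet_Ioi fun σ (hσ : 0 < σ) ↦ ?_
  simp only [smul_eq_mul, rpow_add_natCast hσ.ne', exp_add, mul_comm x]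
  ring

lemma mgf_id_scorerMeasure (γ : ℝ) : mgf id (scorerMeasure γ) = scorerHi γ := by
  ext x
  simpa [mgf] using integral_pow_mul_exp_scorerMeasure γ x 0

lemma integrableExpSet_id_scorerMeasure {γ : ℝ} (hγ : -1 < γ) :
    integrableExpSet id (scorerMeasure γ) = univ := by
  refine eq_univ_of_forall fun x ↦ integrable_scorerMeasure_iff.mpr ?_
  refine (integrableOn_rpow_mul_exp_neg_mul_rpow_add_mul (p := 3) (b := 1 / 3) hγ (by norm_num)
    (by norm_num) x).congr_fun (fun σ _ ↦ ?_) measurableSet_Ioi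
  simp only [id_eq, smul_eq_mul, mul_assoc, ← exp_add, rpow_ofNat]
  ring_nf

lemma analyticOnNhd_scorerHi {γ : ℝ} (hγ : -1 < γ) : AnalyticOnNhd ℝ (scorerHi γ) univ := by
  simpa [mgf_id_scorerMeasure, integrableExpSet_id_scorerMeasure hγ] using
    analyticOnNhd_mgf (X := id) (μ := scorerMeasure γ)

lemma iteratedDeriv_scorerHi {γ : ℝ} (hγ : -1 < γ) (k : ℕ) :
    iteratedDeriv k (scorerHi γ) = scorerHi (γ + k) := by
  ext x
  have hx : x ∈ interior (integrableExpSet id (scorerMeasure γ)) := by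
    simp [integrableExpSet_id_scorerMeasure hγ]
  rw [← mgf_id_scorerMeasure, iteratedDeriv_mgf hx]
  exact integral_pow_mul_exp_scorerMeasure γ x k

lemma hasDerivAt_scorerHi {γ : ℝ} (hγ : -1 < γ) (x : ℝ) :
    HasDerivAt (scorerHi γ) (scorerHi (γ + 1) x) x := by
  have hderiv : deriv (scorerHi γ) = scorerHi (γ + 1) := by
    simpa using iteratedDeriv_scorerHi hγ 1
  rw [← hderiv]
  exact (analyticOnNhd_scorerHi hγ x (mem_univ x)).differentiableAt.hasDerivAt

theorem scorerHi_deriv (γ : ℝ) (hγ : -1 < γ) :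
    (∀ x : ℝ, HasDerivAt (scorerHi γ) (scorerHi (γ + 1) x) x) ∧
    ContDiff ℝ (⊤ : ℕ∞) (scorerHi γ) ∧
    ∀ (k : ℕ) (x : ℝ), iteratedDeriv k (scorerHi γ) x = scorerHi (γ + k) x :=
  ⟨hasDerivAt_scorerHi hγ, (analyticOnNhd_scorerHi hγ).contDiff,
    fun k ↦ congrFun (iteratedDeriv_scorerHi hγ k)⟩
end

section
/- For every real γ > −1: lim_{x→+∞} x^{1/4 − γ/2} · exp(−(2/3)·x^{3/2}) · Hi_γ(x) = 1/√π. -/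
open Real MeasureTheory Filter

/-!
Laplace's method: if the phase `φ` behaves like `c (x - a)²` near `a` and is bounded away from `0`
elsewhere, then `√t exp(-t φ)` is an approximate identity at `a` of total mass `√(π / c)`.
For the Scorer function, the substitution `σ = √x s` turns the exponent into
`x^(3/2) (2/3 - (s - 1)² (s + 2) / 3)`, so `t = x^(3/2)` and the phase has its minimum at `s = 1`,
with `c = 1` there.
-/

open Asymptotics
open scoped Topology

section LaplaceMethod

variable {E : Type*} [NormedAddCommGroup E] [NormedSpace ℝ E]
  {φ : ℝ → ℝ} {s : Set ℝ} {a c : ℝ}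

lemma tendsto_add_div_sqrt_atTop (a u : ℝ) : Tendsto (fun t ↦ a + u / √t) atTop (𝓝 a) := by
  simpa using (tendsto_const_nhds.div_atTop tendsto_sqrt_atTop).const_add a

lemma tendsto_mul_comp_add_div_sqrt (hφ : φ ~[𝓝 a] fun x ↦ c * (x - a) ^ 2) (u : ℝ) :
    Tendsto (fun t ↦ t * φ (a + u / √t)) atTop (𝓝 (c * u ^ 2)) := by
  have hequiv := (IsEquivalent.refl (u := fun t : ℝ ↦ t)).mul
    (hφ.comp_tendsto (tendsto_add_div_sqrt_atTop a u))
  refine hequiv.symm.tendsto_nhds (tendsto_const_nhds.congr' ?_)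
  filter_upwards [eventually_gt_atTop 0] with t ht
  simp only [Pi.mul_apply, Function.comp_apply, add_sub_cancel_left, div_pow, sq_sqrt ht.le]
  field_simp

lemma smul_setIntegral_eq_integral_indicator_comp_add_div (f : ℝ → E) (hs : MeasurableSet s)
    (a : ℝ) {r : ℝ} (hr : 0 ≤ r) :
    r • ∫ x in s, f x = ∫ u, s.indicator f (a + u / r) := by
  rw [Measure.integral_comp_div (fun v ↦ s.indicator f (a + v)) r,
    integral_add_left_eq_self (s.indicator f) a, integral_indicator hs, abs_of_nonneg hr]

lemma tendsto_sqrt_mul_setIntegral_exp_neg_mul {k : ℝ} (hφm : Measurable φ)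
    (hφ : φ ~[𝓝 a] fun x ↦ c * (x - a) ^ 2) (hs : MeasurableSet s) (hsa : s ∈ 𝓝 a)
    (hk : 0 < k) (hle : ∀ x ∈ s, k * (x - a) ^ 2 ≤ φ x) :
    Tendsto (fun t ↦ √t * ∫ x in s, exp (-(t * φ x))) atTop (𝓝 √(π / c)) := by
  simp_rw [← smul_eq_mul (√_), fun t ↦ smul_setIntegral_eq_integral_indicator_comp_add_div
    (fun x ↦ exp (-(t * φ x))) hs a (sqrt_nonneg t)]
  rw [← integral_gaussian]
  refine tendsto_integral_filter_of_dominated_convergence (fun u ↦ exp (-k * u ^ 2))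
    (.of_forall fun t ↦ ?measurable) ?bound (integrable_exp_neg_mul_sq hk)
    (.of_forall fun u ↦ ?limit)
  case measurable =>
    have hexp : Measurable fun x ↦ exp (-(t * φ x)) := by fun_prop
    exact ((hexp.indicator hs).comp (by fun_prop)).aestronglyMeasurable
  case bound =>
    filter_upwards [eventually_gt_atTop 0] with t ht
    refine .of_forall fun u ↦ ?_
    rw [norm_indicator_eq_indicator_norm]
    refine Set.indicator_apply_le' (fun hu ↦ ?_) (fun _ ↦ (exp_pos _).le)
    have hphase : k * u ^ 2 ≤ t * φ (a + u / √t) := calc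
      k * u ^ 2 = t * (k * (a + u / √t - a) ^ 2) := by
        rw [add_sub_cancel_left, div_pow, sq_sqrt ht.le]
        field_simp
      _ ≤ t * φ (a + u / √t) := by gcongr; exact hle _ hu
    rw [norm_of_nonneg (exp_pos _).le, exp_le_exp]
    linarith
  case limit =>
    have hexp := (tendsto_mul_comp_add_div_sqrt hφ u).neg.rexp
    rw [← neg_mul] at hexp
    refine hexp.congr' ?_
    filter_upwards [(tendsto_add_div_sqrt_atTop a u).eventually_mem hsa] with t ht
    rw [Set.indicator_of_mem ht]

lemma tendsto_sqrt_mul_exp_neg_mul_atTop_nhds_zero {δ : ℝ} (hδ : 0 < δ) :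
    Tendsto (fun t ↦ √t * exp (-(t * δ))) atTop (𝓝 0) := by
  refine (tendsto_rpow_mul_exp_neg_mul_atTop_nhds_zero (1 / 2) δ hδ).congr fun t ↦ ?_
  rw [sqrt_eq_rpow, neg_mul, mul_comm δ]

lemma tendstoUniformlyOn_sqrt_mul_exp_neg_mul {α : Type*} {φ : α → ℝ} {s : Set α} {δ : ℝ}
    (hδ : 0 < δ) (hle : ∀ x ∈ s, δ ≤ φ x) :
    TendstoUniformlyOn (fun t x ↦ √t * exp (-(t * φ x))) 0 atTop s := by
  rw [Metric.tendstoUniformlyOn_iff]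
  intro ε hε
  filter_upwards [eventually_ge_atTop 0,
    (tendsto_sqrt_mul_exp_neg_mul_atTop_nhds_zero hδ).eventually_lt_const hε] with t ht hlt x hx
  rw [Pi.zero_apply, dist_zero_left, norm_of_nonneg (by positivity)]
  refine lt_of_le_of_lt ?_ hlt
  gcongr
  exact hle x hx

lemma eventually_mul_sq_le_of_isEquivalent {k : ℝ} (hk : k < c)
    (hφ : φ ~[𝓝 a] fun x ↦ c * (x - a) ^ 2) : ∀ᶠ x in 𝓝 a, k * (x - a) ^ 2 ≤ φ x := by
  obtain ⟨ρ, hρ, hφρ⟩ := hφ.exists_eq_mul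
  have hlim : Tendsto (fun x ↦ ρ x * c) (𝓝 a) (𝓝 c) := by simpa using hρ.mul_const c
  filter_upwards [hφρ, hlim.eventually_const_lt hk] with x hx hkx
  rw [hx, Pi.mul_apply, ← mul_assoc]
  gcongr

theorem tendsto_sqrt_smul_setIntegral_exp_neg_mul_smul_of_integrableOn
    [CompleteSpace E] {g : ℝ → E} {b : E}
    (hφm : Measurable φ) (hφ : φ ~[𝓝 a] fun x ↦ c * (x - a) ^ 2) (hc : 0 < c)
    (hs : MeasurableSet s) (hsa : s ∈ 𝓝 a)
    (hgap : ∀ u ∈ 𝓝 a, ∃ δ > 0, ∀ x ∈ s \ u, δ ≤ φ x)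
    (hg : IntegrableOn g s) (hgb : Tendsto g (𝓝 a) (𝓝 b)) :
    Tendsto (fun t ↦ √t • ∫ x in s, exp (-(t * φ x)) • g x) atTop (𝓝 (√(π / c) • b)) := by
  obtain ⟨r, hr, hball⟩ := Metric.eventually_nhds_iff_ball.mp
    ((eventually_mul_sq_le_of_isEquivalent (half_lt_self hc) hφ).and hsa)
  have hmass : √(π / c) ≠ 0 := by positivity
  have hpeak : Tendsto
      (fun t ↦ ∫ x in s, ((√(π / c))⁻¹ * (√t * exp (-(t * φ x)))) • g x) atTop (𝓝 b) := by
    refine tendsto_setIntegral_peak_smul_of_integrableOn_of_tendsto hs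
      (t := Metric.ball a r) Metric.isOpen_ball.measurableSet (fun x hx ↦ (hball x hx).2)
      (mem_nhdsWithin_of_mem_nhds (Metric.ball_mem_nhds a hr)) measure_ball_lt_top.ne
      (.of_forall fun t x _ ↦ by positivity) (fun u hu hau ↦ ?away) ?mass
      (.of_forall fun t ↦ Measurable.aestronglyMeasurable (by fun_prop)) hg
      (hgb.mono_left nhdsWithin_le_nhds)
    case away =>
      obtain ⟨δ, hδ, hle⟩ := hgap u (hu.mem_nhds hau)
      simpa [Function.comp_def, Pi.zero_def] using
        (uniformContinuous_const_smul (√(π / c))⁻¹).comp_tendstoUniformlyOn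
          (tendstoUniformlyOn_sqrt_mul_exp_neg_mul hδ hle)
    case mass =>
      have hlocal := tendsto_sqrt_mul_setIntegral_exp_neg_mul hφm hφ
        Metric.isOpen_ball.measurableSet (Metric.ball_mem_nhds a hr) (half_pos hc)
        (fun x hx ↦ (hball x hx).1)
      simpa only [integral_const_mul, inv_mul_cancel₀ hmass] using
        hlocal.const_mul (√(π / c))⁻¹
  refine (hpeak.const_smul √(π / c)).congr fun t ↦ ?_
  simp only [mul_smul, integral_smul, smul_inv_smul₀ hmass]

lemma tendsto_sqrt_div_sqrt_sub (t₀ : ℝ) :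
    Tendsto (fun t ↦ √t / √(t - t₀)) atTop (𝓝 1) := by
  have hratio : Tendsto (fun t ↦ 1 + t₀ / (t - t₀)) atTop (𝓝 1) := by
    simpa [sub_eq_add_neg] using (tendsto_const_nhds.div_atTop
      (tendsto_atTop_add_const_right atTop (-t₀) tendsto_id)).const_add (1 : ℝ)
  have hsqrt := hratio.sqrt
  rw [sqrt_one] at hsqrt
  refine hsqrt.congr' ?_
  filter_upwards [eventually_gt_atTop t₀] with t ht
  have hne : t - t₀ ≠ 0 := (sub_pos.mpr ht).ne'
  rw [← sqrt_div' _ (sub_pos.mpr ht).le]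
  congr 1
  field_simp
  ring

theorem tendsto_sqrt_smul_setIntegral_exp_neg_mul_smul
    [CompleteSpace E] {g : ℝ → E} {t₀ : ℝ}
    (hφm : Measurable φ) (hφ : φ ~[𝓝 a] fun x ↦ c * (x - a) ^ 2) (hc : 0 < c)
    (hs : MeasurableSet s) (hsa : s ∈ 𝓝 a)
    (hgap : ∀ u ∈ 𝓝 a, ∃ δ > 0, ∀ x ∈ s \ u, δ ≤ φ x)
    (hg : IntegrableOn (fun x ↦ exp (-(t₀ * φ x)) • g x) s) (hga : ContinuousAt g a) :
    Tendsto (fun t ↦ √t • ∫ x in s, exp (-(t * φ x)) • g x) atTop (𝓝 (√(π / c) • g a)) := by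
  have hφ0 : Tendsto φ (𝓝 a) (𝓝 0) := by
    refine hφ.symm.tendsto_nhds ?_
    have hcont : Continuous fun x ↦ c * (x - a) ^ 2 := by fun_prop
    simpa using hcont.tendsto a
  have hgb : Tendsto (fun x ↦ exp (-(t₀ * φ x)) • g x) (𝓝 a) (𝓝 (g a)) := by
    simpa using (hφ0.const_mul t₀).neg.rexp.smul hga
  -- Absorbing `exp (-(t₀ * φ))` into the amplitude makes it integrable, at the price of replacing
  -- the parameter `t` by `t - t₀`.
  have hshift := (tendsto_sqrt_smul_setIntegral_exp_neg_mul_smul_of_integrableOn hφm hφ hc hs hsa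
    hgap hg hgb).comp (tendsto_atTop_add_const_right atTop (-t₀) tendsto_id)
  have hprod := (tendsto_sqrt_div_sqrt_sub t₀).smul hshift
  rw [one_smul] at hprod
  refine hprod.congr' ?_
  filter_upwards [eventually_gt_atTop t₀] with t ht
  have hne : √(t - t₀) ≠ 0 := (sqrt_pos.mpr (sub_pos.mpr ht)).ne'
  simp only [Function.comp_apply, id_eq, ← sub_eq_add_neg, smul_smul, ← exp_add,
    div_mul_cancel₀ _ hne]
  ring_nf

end LaplaceMethod

/-- The phase `2/3 - s + s³/3` of the Scorer integral after the substitution `σ = √x s`, shifted to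
vanish at its minimum `s = 1` and written in factored form. -/
noncomputable def scorerPhase (s : ℝ) : ℝ :=
  (s - 1) ^ 2 * (s + 2) / 3

lemma measurable_scorerPhase : Measurable scorerPhase := by
  unfold scorerPhase
  fun_prop

lemma isEquivalent_scorerPhase : scorerPhase ~[𝓝 1] fun s ↦ 1 * (s - 1) ^ 2 := by
  refine isEquivalent_iff_exists_eq_mul.mpr ⟨fun s ↦ (s + 2) / 3, ?_, .of_forall fun s ↦ ?_⟩
  · have hcont : Continuous fun s : ℝ ↦ (s + 2) / 3 := by fun_prop
    convert hcont.tendsto 1 using 2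
    norm_num
  · simp only [scorerPhase, Pi.mul_apply]
    ring

lemma exists_pos_le_scorerPhase_of_mem_nhds {u : Set ℝ} (hu : u ∈ 𝓝 1) :
    ∃ δ > 0, ∀ s ∈ Set.Ioi 0 \ u, δ ≤ scorerPhase s := by
  obtain ⟨r, hr, hball⟩ := Metric.mem_nhds_iff.mp hu
  refine ⟨r ^ 2 * 2 / 3, by positivity, fun s ⟨hs, hsu⟩ ↦ ?_⟩
  have hdist : r ≤ |s - 1| := not_lt.mp fun hlt ↦ hsu (hball hlt)
  have hsq : r ^ 2 ≤ (s - 1) ^ 2 := by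
    rw [← sq_abs (s - 1)]
    gcongr
  rw [scorerPhase]
  gcongr
  linarith [Set.mem_Ioi.mp hs]

lemma sub_four_thirds_le_scorerPhase {s : ℝ} (hs : 0 ≤ s) : s - 4 / 3 ≤ scorerPhase s := by
  rw [scorerPhase]
  nlinarith [mul_nonneg hs (sq_nonneg (s - 3 / 2)), sq_nonneg (s - 3 / 2)]

lemma integrableOn_exp_neg_scorerPhase_mul_rpow {γ : ℝ} (hγ : -1 < γ) :
    IntegrableOn (fun s ↦ exp (-scorerPhase s) * s ^ γ) (Set.Ioi 0) := by
  have hgamma : IntegrableOn (fun s ↦ exp (-s) * s ^ γ) (Set.Ioi 0) := by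
    simpa using GammaIntegral_convergent (s := γ + 1) (by linarith)
  have hmeas : Measurable fun s ↦ exp (-scorerPhase s) * s ^ γ :=
    measurable_scorerPhase.neg.exp.mul (by fun_prop)
  refine (hgamma.const_mul (exp (4 / 3))).mono' hmeas.aestronglyMeasurable ?_
  filter_upwards [ae_restrict_mem measurableSet_Ioi] with s (hs : 0 < s)
  rw [norm_of_nonneg (by positivity), ← mul_assoc, ← exp_add]
  gcongr
  linarith [sub_four_thirds_le_scorerPhase hs.le]

lemma tendsto_sqrt_mul_setIntegral_exp_neg_mul_scorerPhase {γ : ℝ} (hγ : -1 < γ) :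
    Tendsto (fun t ↦ √t * ∫ s in Set.Ioi 0, exp (-(t * scorerPhase s)) * s ^ γ)
      atTop (𝓝 √π) := by
  have hlaplace := tendsto_sqrt_smul_setIntegral_exp_neg_mul_smul (t₀ := 1) (g := (· ^ γ))
    measurable_scorerPhase isEquivalent_scorerPhase one_pos measurableSet_Ioi
    (Ioi_mem_nhds one_pos) (fun _ ↦ exists_pos_le_scorerPhase_of_mem_nhds)
    (by simpa using integrableOn_exp_neg_scorerPhase_mul_rpow hγ)
    (continuousAt_rpow_const 1 γ (.inl one_ne_zero))
  simpa using hlaplace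

lemma rpow_mul_exp_neg_cube_add_mul_eq (γ : ℝ) {b s : ℝ} (hb : 0 ≤ b) (hs : 0 ≤ s) :
    (b * s) ^ γ * exp (-(b * s) ^ 3 / 3 + b * s * b ^ 2)
      = b ^ γ * exp (2 / 3 * b ^ 3) * (exp (-(b ^ 3 * scorerPhase s)) * s ^ γ) := by
  have hexponent : -(b * s) ^ 3 / 3 + b * s * b ^ 2
      = 2 / 3 * b ^ 3 + -(b ^ 3 * scorerPhase s) := by
    rw [scorerPhase]
    ring
  rw [hexponent, exp_add, mul_rpow hb hs]
  ring

lemma scorerHi_sq_eq (γ : ℝ) {b : ℝ} (hb : 0 < b) :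
    scorerHi γ (b ^ 2) = 1 / π * (b ^ (γ + 1) * exp (2 / 3 * b ^ 3)
      * ∫ s in Set.Ioi 0, exp (-(b ^ 3 * scorerPhase s)) * s ^ γ) := by
  have hsubst := integral_comp_mul_left_Ioi'
    (fun σ ↦ σ ^ γ * exp (-σ ^ 3 / 3 + σ * b ^ 2)) 0 hb
  rw [mul_zero] at hsubst
  rw [scorerHi, ← hsubst, setIntegral_congr_fun measurableSet_Ioi fun s hs ↦
    rpow_mul_exp_neg_cube_add_mul_eq γ hb.le (le_of_lt hs), integral_const_mul,
    rpow_add_one hb.ne', smul_eq_mul]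
  ring

lemma rpow_mul_exp_mul_scorerHi_eq (γ : ℝ) {x : ℝ} (hx : 0 < x) :
    x ^ (1 / 4 - γ / 2) * exp (-(2 / 3) * x ^ ((3 : ℝ) / 2)) * scorerHi γ x
      = 1 / π * (√(x ^ ((3 : ℝ) / 2))
        * ∫ s in Set.Ioi 0, exp (-(x ^ ((3 : ℝ) / 2) * scorerPhase s)) * s ^ γ) := by
  have hcube : √x ^ 3 = x ^ ((3 : ℝ) / 2) := by
    rw [sqrt_eq_rpow, ← rpow_mul_natCast hx.le]
    norm_num
  have hpower : x ^ (1 / 4 - γ / 2) * √x ^ (γ + 1) = √(x ^ ((3 : ℝ) / 2)) := by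
    rw [sqrt_eq_rpow, sqrt_eq_rpow, ← rpow_mul hx.le, ← rpow_mul hx.le, ← rpow_add hx]
    ring_nf
  have hexp : exp (-(2 / 3) * x ^ ((3 : ℝ) / 2)) * exp (2 / 3 * x ^ ((3 : ℝ) / 2)) = 1 := by
    rw [← exp_add, neg_mul, neg_add_cancel, exp_zero]
  have hscorer := scorerHi_sq_eq γ (sqrt_pos.mpr hx)
  rw [sq_sqrt hx.le, hcube] at hscorer
  rw [hscorer, ← hpower]
  linear_combination (1 / π * x ^ (1 / 4 - γ / 2) * √x ^ (γ + 1)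
    * ∫ s in Set.Ioi 0, exp (-(x ^ ((3 : ℝ) / 2) * scorerPhase s)) * s ^ γ) * hexp

theorem scorerHi_asymptotics_at_plus_infinity (γ : ℝ) (hγ : -1 < γ) :
    Tendsto
      (fun x : ℝ => x ^ (1 / 4 - γ / 2) * Real.exp (-(2 / 3) * x ^ ((3 : ℝ) / 2))
        * scorerHi γ x)
      atTop (nhds (1 / Real.sqrt π)) := by
  have hconst : 1 / π * √π = 1 / √π := by rw [one_div_mul_eq_div, sqrt_div_self']
  have hlim := ((tendsto_sqrt_mul_setIntegral_exp_neg_mul_scorerPhase hγ).comp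
    (tendsto_rpow_atTop (by norm_num : (0 : ℝ) < 3 / 2))).const_mul (1 / π)
  rw [hconst] at hlim
  refine hlim.congr' ?_
  filter_upwards [eventually_gt_atTop 0] with x hx
  exact (rpow_mul_exp_mul_scorerHi_eq γ hx).symm
end

section
/- For every real γ with −1 < γ < 2, the improper integral lim_{R→∞} ∫_0^R σ^γ · cos(σ³/3 − γπ/2) dσ exists and equals −sin(π(γ−2)/3) · 3^{(γ−2)/3} · Γ((γ+1)/3). Equivalently, the generalized Airy function value Ai_γ(0) = (1/π)·lim_{R→∞} ∫_0^R σ^γ · cos(σ³/3 − γπ/2) dσ equals −(1/π)·sin(π(γ−2)/3) · 3^{(γ−2)/3} · Γ((γ+1)/3). -/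
open Real MeasureTheory Filter intervalIntegral

/-!
The substitution `t = σ ^ 3` turns the integral into the real part of a constant multiple of the
Laplace integral `∫ t ^ (a - 1) * exp (-(z * t))`, with `a = (γ + 1) / 3`, at `z = I / 3`.
For `0 < Re z` the Laplace integral over `(0, ∞)` equals `(1 / z) ^ a * Γ(a)`: both sides are
holomorphic and they agree for real `z`. One integration by parts bounds its tail beyond `R` by
`C * R ^ (Re a - 1) / ‖z‖`, with `C` independent of `z`. Hence the integral over `(0, R)` differs
from `(1 / z) ^ a * Γ(a)` by at most that much; both being continuous up to the imaginary axis, the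
same bound holds at `z = I / 3`, and it tends to zero as `R → ∞`.
-/

section LaplaceTransform

open Set Topology

variable {a b z : ℂ} {R : ℝ}

theorem norm_cpow_mul_exp_neg_mul (b z : ℂ) {t : ℝ} (ht : 0 < t) :
    ‖(t : ℂ) ^ b * Complex.exp (-(z * t))‖ = t ^ b.re * Real.exp (-(z.re * t)) := by
  simp [Complex.norm_cpow_eq_rpow_re_of_pos ht, Complex.norm_exp]

theorem norm_cpow_mul_exp_neg_mul_le (b : ℂ) (hz : 0 ≤ z.re) {t : ℝ} (ht : 0 < t) :
    ‖(t : ℂ) ^ b * Complex.exp (-(z * t))‖ ≤ t ^ b.re := by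
  rw [norm_cpow_mul_exp_neg_mul b z ht]
  exact mul_le_of_le_one_right (by positivity) (exp_le_one_iff.2 (neg_nonpos.2 (by positivity)))

theorem integrableOn_Ioi_zero_cpow_mul_exp_neg_mul (hb : -1 < b.re) (hz : 0 < z.re) :
    IntegrableOn (fun t : ℝ ↦ (t : ℂ) ^ b * Complex.exp (-(z * t))) (Ioi 0) := by
  have hreal : IntegrableOn (fun t : ℝ ↦ t ^ b.re * Real.exp (-(z.re * t))) (Ioi 0) := by
    simpa using integrableOn_rpow_mul_exp_neg_mul_rpow hb one_pos hz
  refine hreal.mono' (Measurable.aestronglyMeasurable (by fun_prop)) ?_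
  filter_upwards [ae_restrict_mem measurableSet_Ioi] with t ht
  exact (norm_cpow_mul_exp_neg_mul b z ht).le

theorem hasDerivAt_integral_Ioi_cpow_mul_exp_neg_mul (hb : -1 < b.re) (hz : 0 < z.re) :
    HasDerivAt (fun w : ℂ ↦ ∫ t : ℝ in Ioi 0, (t : ℂ) ^ b * Complex.exp (-(w * t)))
      (∫ t : ℝ in Ioi 0, (t : ℂ) ^ b * (Complex.exp (-(z * t)) * -t)) z := by
  have hnhds : {w : ℂ | z.re / 2 < w.re} ∈ 𝓝 z :=
    (isOpen_lt continuous_const Complex.continuous_re).mem_nhds (half_lt_self hz)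
  have hbound : IntegrableOn
      (fun t : ℝ ↦ t ^ (b.re + 1) * Real.exp (-(z.re / 2 * t))) (Ioi 0) := by
    simpa using integrableOn_rpow_mul_exp_neg_mul_rpow (s := b.re + 1) (by linarith) one_pos
      (half_pos hz)
  refine (_root_.hasDerivAt_integral_of_dominated_loc_of_deriv_le hnhds
    (F := fun w (t : ℝ) ↦ (t : ℂ) ^ b * Complex.exp (-(w * t)))
    (F' := fun w t ↦ (t : ℂ) ^ b * (Complex.exp (-(w * t)) * -t))
    (μ := volume.restrict (Ioi 0))
    (.of_forall fun w ↦ Measurable.aestronglyMeasurable (by fun_prop))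
    (integrableOn_Ioi_zero_cpow_mul_exp_neg_mul hb hz)
    (Measurable.aestronglyMeasurable (by fun_prop)) ?_ hbound ?_).2
  · filter_upwards [ae_restrict_mem measurableSet_Ioi] with t (ht : 0 < t) w (hw : _ < _)
    calc ‖(t : ℂ) ^ b * (Complex.exp (-(w * t)) * -t)‖
        = t ^ (b.re + 1) * Real.exp (-(w.re * t)) := by
          rw [← mul_assoc, norm_mul, norm_cpow_mul_exp_neg_mul b w ht, norm_neg,
            Complex.norm_of_nonneg ht.le, rpow_add_one ht.ne']
          ring
      _ ≤ t ^ (b.re + 1) * Real.exp (-(z.re / 2 * t)) := by gcongr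
  · refine .of_forall fun t w _ ↦ ?_
    simpa using ((hasDerivAt_mul_const (t : ℂ)).neg.cexp.const_mul ((t : ℂ) ^ b) :
      HasDerivAt (fun w : ℂ ↦ (t : ℂ) ^ b * Complex.exp (-(w * t))) _ w)

theorem differentiableAt_one_div_cpow (a : ℂ) (hz : z ∈ Complex.slitPlane) :
    DifferentiableAt ℂ (fun w ↦ (1 / w) ^ a) z := by
  have hz0 : z ≠ 0 := Complex.slitPlane_ne_zero hz
  have hinv : 1 / z ∈ Complex.slitPlane := by
    rw [one_div, Complex.mem_slitPlane_iff_arg, Complex.arg_inv,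
      if_neg (Complex.slitPlane_arg_ne_pi hz)]
    exact ⟨(neg_lt.1 (Complex.neg_pi_lt_arg z)).ne, inv_ne_zero hz0⟩
  exact ((differentiableAt_const 1).fun_div differentiableAt_fun_id hz0).cpow_const hinv

theorem integral_Ioi_cpow_mul_exp_neg_mul (ha : 0 < a.re) (hz : 0 < z.re) :
    ∫ t : ℝ in Ioi 0, (t : ℂ) ^ (a - 1) * Complex.exp (-(z * t)) =
      (1 / z) ^ a * Complex.Gamma a := by
  have hopen : IsOpen {w : ℂ | 0 < w.re} := isOpen_lt continuous_const Complex.continuous_re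
  have hleft : DifferentiableOn ℂ
      (fun w ↦ ∫ t : ℝ in Ioi 0, (t : ℂ) ^ (a - 1) * Complex.exp (-(w * t)))
      {w : ℂ | 0 < w.re} := fun w hw ↦
    (hasDerivAt_integral_Ioi_cpow_mul_exp_neg_mul (by simpa using ha)
      hw).differentiableAt.differentiableWithinAt
  have hright : DifferentiableOn ℂ (fun w ↦ (1 / w) ^ a * Complex.Gamma a)
      {w : ℂ | 0 < w.re} := fun w (hw : 0 < w.re) ↦
    ((differentiableAt_one_div_cpow a (.inl hw)).mul_const _).differentiableWithinAt
  have hreal : ∃ᶠ w : ℂ in 𝓝[≠] 1,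
      ∫ t : ℝ in Ioi 0, (t : ℂ) ^ (a - 1) * Complex.exp (-(w * t)) =
        (1 / w) ^ a * Complex.Gamma a := by
    have hcoe : Tendsto ((↑) : ℝ → ℂ) (𝓝[>] 1) (𝓝[≠] 1) :=
      tendsto_nhdsWithin_iff.2 ⟨(Complex.continuous_ofReal.tendsto' 1 1 (by simp)).mono_left
        nhdsWithin_le_nhds, by
          filter_upwards [self_mem_nhdsWithin] with r (hr : 1 < r)
          simpa using hr.ne'⟩
    refine hcoe.frequently (Eventually.frequently ?_)
    filter_upwards [self_mem_nhdsWithin] with r (hr : 1 < r)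
    exact Complex.integral_cpow_mul_exp_neg_mul_Ioi ha (one_pos.trans hr)
  exact (hleft.analyticOnNhd hopen).eqOn_of_preconnected_of_frequently_eq
    (hright.analyticOnNhd hopen) (convex_halfSpace_re_gt 0).isPreconnected (by simp) hreal hz

theorem integrableOn_Ioi_cpow_mul_exp_neg_mul (b : ℂ) (hz : 0 < z.re) (hR : 0 < R) :
    IntegrableOn (fun t : ℝ ↦ (t : ℂ) ^ b * Complex.exp (-(z * t))) (Ioi R) := by
  have hreal : IntegrableOn (fun t : ℝ ↦ t ^ b.re * Real.exp (-(z.re * t))) (Ioi R) := by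
    refine integrable_of_isBigO_exp_neg (half_pos hz) ?_ ?_
    · exact (continuousOn_id.rpow_const fun t ht ↦ .inl (hR.trans_le ht).ne').mul (by fun_prop)
    · refine ((isLittleO_rpow_exp_pos_mul_atTop b.re (half_pos hz)).isBigO.mul
        (Asymptotics.isBigO_refl (fun t ↦ Real.exp (-(z.re * t))) atTop)).congr_right fun t ↦ ?_
      rw [← Real.exp_add]
      ring_nf
  refine hreal.mono' (Measurable.aestronglyMeasurable (by fun_prop)) ?_
  filter_upwards [ae_restrict_mem measurableSet_Ioi] with t (ht : R < t)
  exact (norm_cpow_mul_exp_neg_mul b z (hR.trans ht)).le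

theorem integral_Ioi_cpow_mul_exp_neg_mul_by_parts (b : ℂ) (hz : 0 < z.re) (hR : 0 < R) :
    ∫ t : ℝ in Ioi R, (t : ℂ) ^ b * Complex.exp (-(z * t)) =
      (R : ℂ) ^ b * Complex.exp (-(z * R)) / z +
        b / z * ∫ t : ℝ in Ioi R, (t : ℂ) ^ (b - 1) * Complex.exp (-(z * t)) := by
  have hz0 : z ≠ 0 := fun h ↦ by simp [h] at hz
  have hpow (t : ℝ) (ht : t ∈ Ici R) :
      HasDerivAt (fun t : ℝ ↦ (t : ℂ) ^ b) (b * (t : ℂ) ^ (b - 1)) t := by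
    simpa using ((hasDerivAt_id (t : ℂ)).cpow_const (c := b)
      (Complex.ofReal_mem_slitPlane.2 (hR.trans_le ht))).comp_ofReal
  have hexp (t : ℝ) :
      HasDerivAt (fun t : ℝ ↦ -Complex.exp (-(z * t)) / z) (Complex.exp (-(z * t))) t := by
    refine (((((hasDerivAt_id (t : ℂ)).const_mul z).neg.cexp).neg.div_const z).comp_ofReal
      ).congr_deriv ?_
    simp [hz0]
  have hzero : Tendsto (fun t : ℝ ↦ (t : ℂ) ^ b * (-Complex.exp (-(z * t)) / z)) (𝓝[>] R)
      (𝓝 ((R : ℂ) ^ b * (-Complex.exp (-(z * R)) / z))) :=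
    ((hpow R self_mem_Ici).continuousAt.mul (hexp R).continuousAt).tendsto.mono_left
      nhdsWithin_le_nhds
  have hinfty : Tendsto (fun t : ℝ ↦ (t : ℂ) ^ b * (-Complex.exp (-(z * t)) / z)) atTop (𝓝 0) := by
    refine squeeze_zero_norm' (a := fun t ↦ t ^ b.re * Real.exp (-z.re * t) / ‖z‖) ?_ ?_
    · filter_upwards [eventually_gt_atTop 0] with t ht
      rw [neg_div, mul_neg, norm_neg, ← mul_div_assoc, norm_div, norm_cpow_mul_exp_neg_mul b z ht,
        neg_mul]
    · simpa using (tendsto_rpow_mul_exp_neg_mul_atTop_nhds_zero b.re z.re hz).div_const ‖z‖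
  have hparts := integral_Ioi_mul_deriv_eq_deriv_mul
    (fun t ht ↦ hpow t (mem_Ici_of_Ioi ht)) (fun t _ ↦ hexp t)
    (integrableOn_Ioi_cpow_mul_exp_neg_mul b hz hR)
    (((integrableOn_Ioi_cpow_mul_exp_neg_mul (b - 1) hz hR).const_mul (-b / z)).congr
      (.of_forall fun t ↦ by simp; ring)) hzero hinfty
  rw [hparts, ← MeasureTheory.integral_const_mul, sub_eq_add_neg, ← MeasureTheory.integral_neg]
  congr 1
  · ring
  · congr with t; ring

theorem norm_integral_Ioi_cpow_mul_exp_neg_mul_le (hb : b.re < 0) (hz : 0 < z.re) (hR : 0 < R) :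
    ‖∫ t : ℝ in Ioi R, (t : ℂ) ^ b * Complex.exp (-(z * t))‖ ≤
      (1 + ‖b‖ / -b.re) * R ^ b.re / ‖z‖ := by
  have hboundary : ‖(R : ℂ) ^ b * Complex.exp (-(z * R))‖ ≤ R ^ b.re :=
    norm_cpow_mul_exp_neg_mul_le b hz.le hR
  have hremainder : ‖∫ t : ℝ in Ioi R, (t : ℂ) ^ (b - 1) * Complex.exp (-(z * t))‖ ≤
      R ^ b.re / -b.re := by
    calc _ ≤ ∫ t : ℝ in Ioi R, t ^ (b.re - 1) := by
          refine norm_integral_le_of_norm_le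
            (integrableOn_Ioi_rpow_of_lt (by linarith) hR) ?_
          filter_upwards [ae_restrict_mem measurableSet_Ioi] with t (ht : R < t)
          simpa using norm_cpow_mul_exp_neg_mul_le (b - 1) hz.le (hR.trans ht)
      _ = R ^ b.re / -b.re := by
          rw [integral_Ioi_rpow_of_lt (by linarith) hR, sub_add_cancel, neg_div, div_neg]
  rw [integral_Ioi_cpow_mul_exp_neg_mul_by_parts b hz hR]
  calc _ ≤ R ^ b.re / ‖z‖ + ‖b‖ / ‖z‖ * (R ^ b.re / -b.re) := by
        refine norm_add_le_of_le ?_ ?_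
        · rw [norm_div]; gcongr
        · rw [norm_mul, norm_div]; gcongr
    _ = _ := by ring

theorem continuousOn_integral_cpow_mul_exp_neg_mul (hb : -1 < b.re) (hR : 0 ≤ R) :
    ContinuousOn (fun w : ℂ ↦ ∫ t in (0 : ℝ)..R, (t : ℂ) ^ b * Complex.exp (-(w * t)))
      {w | 0 ≤ w.re} := by
  refine fun z _ ↦ continuousWithinAt_of_dominated_interval (bound := fun t ↦ t ^ b.re)
    (.of_forall fun w ↦ Measurable.aestronglyMeasurable (by fun_prop)) ?_
    (intervalIntegrable_rpow' hb)
    (.of_forall fun t _ ↦ Continuous.continuousWithinAt (by fun_prop))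
  filter_upwards [self_mem_nhdsWithin] with w (hw : 0 ≤ w.re)
  rw [uIoc_of_le hR]
  exact .of_forall fun t ht ↦ norm_cpow_mul_exp_neg_mul_le b hw ht.1

theorem norm_integral_cpow_mul_exp_neg_mul_sub_le (ha : 0 < a.re) (ha1 : a.re < 1)
    (hz : 0 ≤ z.re) (hz0 : z ≠ 0) (hR : 0 < R) :
    ‖(∫ t in (0 : ℝ)..R, (t : ℂ) ^ (a - 1) * Complex.exp (-(z * t))) -
        (1 / z) ^ a * Complex.Gamma a‖ ≤
      (1 + ‖a - 1‖ / (1 - a.re)) * R ^ (a.re - 1) / ‖z‖ := by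
  have hinterior (w : ℂ) (hw : 0 < w.re) :
      ‖(∫ t in (0 : ℝ)..R, (t : ℂ) ^ (a - 1) * Complex.exp (-(w * t))) -
          (1 / w) ^ a * Complex.Gamma a‖ ≤
        (1 + ‖a - 1‖ / (1 - a.re)) * R ^ (a.re - 1) / ‖w‖ := by
    have hintegrable := integrableOn_Ioi_zero_cpow_mul_exp_neg_mul (b := a - 1)
      (by simpa using ha) hw
    rw [← integral_Ioi_cpow_mul_exp_neg_mul ha hw, ← integral_interval_add_Ioi hintegrable
      (hintegrable.mono_set (Ioi_subset_Ioi hR.le)), sub_add_cancel_left, norm_neg]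
    simpa using norm_integral_Ioi_cpow_mul_exp_neg_mul_le (b := a - 1) (by simpa using ha1) hw hR
  have hslit : z ∈ Complex.slitPlane :=
    hz.lt_or_eq.imp id fun hre him ↦ hz0 (Complex.ext hre.symm him)
  refine ContinuousWithinAt.closure_le (s := {w : ℂ | 0 < w.re}) (by simpa using hz) ?_ ?_
    hinterior
  · refine ContinuousWithinAt.norm (.sub ?_ ?_)
    · exact (continuousOn_integral_cpow_mul_exp_neg_mul (by simpa using ha) hR.le z hz).mono
        fun w (hw : 0 < w.re) ↦ hw.le
    · exact ((differentiableAt_one_div_cpow a hslit).continuousAt.mul_const _).continuousWithinAt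
  · exact (continuousAt_const.div continuous_norm.continuousAt
      (norm_ne_zero_iff.2 hz0)).continuousWithinAt

theorem tendsto_integral_cpow_mul_exp_neg_mul (ha : 0 < a.re) (ha1 : a.re < 1)
    (hz : 0 ≤ z.re) (hz0 : z ≠ 0) :
    Tendsto (fun R : ℝ ↦ ∫ t in (0 : ℝ)..R, (t : ℂ) ^ (a - 1) * Complex.exp (-(z * t))) atTop
      (𝓝 ((1 / z) ^ a * Complex.Gamma a)) := by
  have hrate : Tendsto (fun R : ℝ ↦ (1 + ‖a - 1‖ / (1 - a.re)) * R ^ (a.re - 1) / ‖z‖) atTop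
      (𝓝 0) := by
    simpa using ((tendsto_rpow_neg_atTop (sub_pos.2 ha1)).const_mul _).div_const ‖z‖
  refine tendsto_iff_norm_sub_tendsto_zero.2 (squeeze_zero' (.of_forall fun R ↦ norm_nonneg _)
    ?_ hrate)
  filter_upwards [eventually_gt_atTop 0] with R hR
  exact norm_integral_cpow_mul_exp_neg_mul_sub_le ha ha1 hz hz0 hR

end LaplaceTransform

section OscillatoryIntegral

variable {γ s p c : ℝ}

theorem one_div_ofReal_mul_I_cpow (hc : 0 < c) (a : ℂ) :
    (1 / (c * Complex.I)) ^ a = (c : ℂ) ^ (-a) * Complex.exp (-(π * a / 2) * Complex.I) := by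
  have hc0 : (c : ℂ) ≠ 0 := Complex.ofReal_ne_zero.2 hc.ne'
  have hlog : Complex.log (1 / (c * Complex.I)) = -Complex.log c - π / 2 * Complex.I := by
    have hbase : 1 / (c * Complex.I) = (c⁻¹ : ℝ) * -Complex.I := by
      rw [one_div, mul_inv, Complex.inv_I, Complex.ofReal_inv]
    rw [hbase, Complex.log_ofReal_mul (inv_pos.2 hc) (neg_ne_zero.2 Complex.I_ne_zero),
      Complex.log_neg_I, Real.log_inv, Complex.ofReal_neg, Complex.ofReal_log hc.le]
    ring
  rw [Complex.cpow_def_of_ne_zero (one_div_ne_zero (mul_ne_zero hc0 Complex.I_ne_zero)), hlog,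
    Complex.cpow_def_of_ne_zero hc0, ← Complex.exp_add]
  ring_nf

theorem re_exp_mul_I_mul_ofReal_mul_exp_neg_mul_I (b r x : ℝ) :
    (Complex.exp (b * Complex.I) * (r * Complex.exp (-x * Complex.I))).re =
      r * Real.cos (x - b) := by
  rw [mul_left_comm, ← Complex.exp_add, ← add_mul, Complex.re_ofReal_mul,
    ← Complex.ofReal_neg, ← Complex.ofReal_add, Complex.exp_ofReal_mul_I_re, ← Real.cos_neg,
    neg_add, neg_neg, neg_add_eq_sub]

theorem tendsto_integral_rpow_mul_cos (hs : 0 < s) (hs1 : s < 1) (hc : 0 < c) (b : ℝ) :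
    Tendsto (fun R : ℝ ↦ ∫ t in (0 : ℝ)..R, t ^ (s - 1) * Real.cos (c * t - b)) atTop
      (nhds (c ^ (-s) * Real.Gamma s * Real.cos (π * s / 2 - b))) := by
  have hz0 : (c : ℂ) * Complex.I ≠ 0 :=
    mul_ne_zero (Complex.ofReal_ne_zero.2 hc.ne') Complex.I_ne_zero
  have hlaplace := tendsto_integral_cpow_mul_exp_neg_mul (a := s) (z := c * Complex.I)
    (by simpa using hs) (by simpa using hs1) (by simp) hz0
  have hlim : (Complex.exp (b * Complex.I) *
      ((1 / (c * Complex.I)) ^ (s : ℂ) * Complex.Gamma s)).re =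
        c ^ (-s) * Real.Gamma s * Real.cos (π * s / 2 - b) := by
    rw [← re_exp_mul_I_mul_ofReal_mul_exp_neg_mul_I, one_div_ofReal_mul_I_cpow hc,
      Complex.Gamma_ofReal, mul_right_comm, Complex.ofReal_mul, Complex.ofReal_cpow hc.le]
    push_cast
    rfl
  rw [← hlim]
  refine ((Complex.continuous_re.tendsto _).comp
    (hlaplace.const_mul (Complex.exp (b * Complex.I)))).congr' ?_
  filter_upwards [eventually_ge_atTop 0] with R hR
  have hintegrable : IntervalIntegrable
      (fun t : ℝ ↦ (t : ℂ) ^ ((s : ℂ) - 1) * Complex.exp (-(c * Complex.I * t))) volume 0 R :=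
    (intervalIntegrable_cpow' (by simpa using hs)).mul_continuousOn (by fun_prop)
  rw [Function.comp_apply, ← intervalIntegral.integral_const_mul, ← Complex.reCLM_apply,
    ← Complex.reCLM.intervalIntegral_comp_comm (hintegrable.const_mul _)]
  refine integral_congr fun t ht ↦ ?_
  rw [Set.uIcc_of_le hR] at ht
  have hexponent : -(c * Complex.I * t) = -(c * t : ℝ) * Complex.I := by push_cast; ring
  rw [Complex.reCLM_apply, ← re_exp_mul_I_mul_ofReal_mul_exp_neg_mul_I, Complex.ofReal_cpow ht.1,
    hexponent]
  simp

theorem intervalIntegral_comp_rpow_of_pos {E : Type*} [NormedAddCommGroup E] [NormedSpace ℝ E]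
    (hp : 0 < p) {R : ℝ} (hR : 0 ≤ R) (g : ℝ → E) :
    ∫ x in (0 : ℝ)..R, (p * x ^ (p - 1)) • g (x ^ p) = ∫ y in (0 : ℝ)..R ^ p, g y := by
  have hpos (x : ℝ) (hx : x ∈ Set.Ioo (min 0 R) (max 0 R)) : 0 < x := by
    rw [min_eq_left hR] at hx
    exact hx.1
  simpa [zero_rpow hp.ne'] using integral_deriv_smul_comp_of_deriv_nonneg (g := g)
    (continuous_rpow_const hp.le).continuousOn
    (fun x hx ↦ hasDerivAt_rpow_const (.inl (hpos x hx).ne'))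
    (fun x hx ↦ mul_nonneg hp.le (rpow_nonneg (hpos x hx).le (p - 1)))

theorem integral_rpow_mul_cos_rpow (hp : 0 < p) (γ b c : ℝ) {R : ℝ} (hR : 0 ≤ R) :
    ∫ σ in (0 : ℝ)..R, σ ^ γ * Real.cos (c * σ ^ p - b) =
      p⁻¹ * ∫ t in (0 : ℝ)..R ^ p, t ^ ((γ + 1) / p - 1) * Real.cos (c * t - b) := by
  rw [← intervalIntegral_comp_rpow_of_pos hp hR, ← intervalIntegral.integral_const_mul]
  refine integral_congr_ae (.of_forall fun σ hσ ↦ ?_)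
  have hσ0 : 0 < σ := by
    rw [Set.uIoc_of_le hR] at hσ
    exact hσ.1
  have hpow : σ ^ γ = σ ^ (p - 1) * (σ ^ p) ^ ((γ + 1) / p - 1) := by
    rw [← rpow_mul hσ0.le, ← rpow_add hσ0]
    congr 1
    field_simp
    ring
  rw [hpow, smul_eq_mul]
  field_simp

theorem tendsto_integral_rpow_mul_cos_rpow (hγ : -1 < γ) (hγp : γ + 1 < p) (hc : 0 < c)
    (b : ℝ) :
    Tendsto (fun R : ℝ ↦ ∫ σ in (0 : ℝ)..R, σ ^ γ * Real.cos (c * σ ^ p - b)) atTop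
      (nhds (p⁻¹ * (c ^ (-((γ + 1) / p)) * Real.Gamma ((γ + 1) / p) *
        Real.cos (π * ((γ + 1) / p) / 2 - b)))) := by
  have hp : 0 < p := by linarith
  have hs : 0 < (γ + 1) / p := div_pos (by linarith) hp
  refine (((tendsto_integral_rpow_mul_cos hs ((div_lt_one hp).2 hγp) hc b).comp
    (tendsto_rpow_atTop hp)).const_mul p⁻¹).congr' ?_
  filter_upwards [eventually_ge_atTop 0] with R hR
  exact (integral_rpow_mul_cos_rpow hp γ b c hR).symm

end OscillatoryIntegral

theorem generalized_airy_at_zero (γ : ℝ) (hγ₁ : -1 < γ) (hγ₂ : γ < 2) :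
    Tendsto
      (fun R : ℝ => ∫ σ in (0 : ℝ)..R, σ ^ γ * Real.cos (σ ^ 3 / 3 - γ * π / 2))
      atTop
      (nhds (-Real.sin (π * (γ - 2) / 3) * (3 : ℝ) ^ ((γ - 2) / 3)
        * Real.Gamma ((γ + 1) / 3))) ∧
    Tendsto
      (fun R : ℝ => (1 / π) * ∫ σ in (0 : ℝ)..R, σ ^ γ * Real.cos (σ ^ 3 / 3 - γ * π / 2))
      atTop
      (nhds (-(1 / π) * Real.sin (π * (γ - 2) / 3) * (3 : ℝ) ^ ((γ - 2) / 3)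
        * Real.Gamma ((γ + 1) / 3))) := by
  have hcos : Real.cos (π * ((γ + 1) / 3) / 2 - γ * π / 2) = -Real.sin (π * (γ - 2) / 3) := by
    rw [← Real.cos_add_pi_div_two, ← Real.cos_neg]
    ring_nf
  have hpow : (3 : ℝ)⁻¹ * (1 / 3) ^ (-((γ + 1) / 3)) = 3 ^ ((γ - 2) / 3) := by
    rw [one_div, inv_rpow (by norm_num), ← rpow_neg (by norm_num), neg_neg, ← rpow_neg_one,
      ← rpow_add (by norm_num)]
    ring_nf
  have hlim := tendsto_integral_rpow_mul_cos_rpow (p := 3) (c := 1 / 3) hγ₁ (by linarith)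
    (by norm_num) (γ * π / 2)
  rw [hcos, ← mul_assoc, ← mul_assoc, hpow, mul_right_comm, mul_comm (3 ^ _)] at hlim
  simp only [rpow_ofNat, one_div_mul_eq_div] at hlim
  refine ⟨by simpa using hlim, ?_⟩
  convert hlim.const_mul (1 / π) using 2
  ring
end

section
/- For every real γ with −1 < γ < 2, the improper integral lim_{R→∞} ∫_0^R σ^γ · sin(σ³/3 − γπ/2) dσ exists and equals −cos(π(γ−2)/3) · 3^{(γ−2)/3} · Γ((γ+1)/3). Equivalently, the generalized Scorer function value Gi_γ(0) = (1/π)·lim_{R→∞} ∫_0^R σ^γ · sin(σ³/3 − γπ/2) dσ equals −(1/π)·cos(π(γ−2)/3) · 3^{(γ−2)/3} · Γ((γ+1)/3). -/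
/-!
The tail `∫_R^T t ^ (a - 1) * exp (-z t) dt` is at most a constant times `R ^ (Re a - 1) / ‖z‖`,
uniformly on the closed right half-plane, by one integration by parts. Hence the truncated integral
`∫_0^R` differs from Euler's value `z ^ (-a) * Γ(a)` by at most this amount for `Re z > 0`, and both
sides of this inequality are continuous up to the imaginary axis (the origin excluded), where the
improper integral converges only conditionally. Taking `z = -iω` evaluates
`∫_0^∞ t ^ (a - 1) * sin (ω t - c) dt`, and `t = σ ^ p` turns the phase `ω t` into `ω σ ^ p`.
-/

open Real MeasureTheory Filter intervalIntegral

open Set Topology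

section HalfPlane

open Complex

variable {a z : ℂ}

lemma norm_cexp_neg_mul_ofReal_le_one (hz : 0 ≤ z.re) {t : ℝ} (ht : 0 ≤ t) :
    ‖cexp (-(z * t))‖ ≤ 1 := by
  rw [Complex.norm_exp, neg_re, re_mul_ofReal, Real.exp_le_one_iff]
  exact neg_nonpos.2 (mul_nonneg hz ht)

lemma norm_cpow_mul_cexp_neg_mul {t : ℝ} (ht : 0 < t) :
    ‖(t : ℂ) ^ a * cexp (-(z * t))‖ = t ^ a.re * Real.exp (-z.re * t) := by
  rw [norm_mul, norm_cpow_eq_rpow_re_of_pos ht, Complex.norm_exp, neg_re, re_mul_ofReal, neg_mul]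

lemma integrableOn_rpow_mul_exp_neg_mul {s b : ℝ} (hs : -1 < s) (hb : 0 < b) :
    IntegrableOn (fun t : ℝ => t ^ s * Real.exp (-b * t)) (Ioi 0) := by
  simpa only [Real.rpow_one] using integrableOn_rpow_mul_exp_neg_mul_rpow hs one_pos hb

lemma integrableOn_cpow_mul_cexp_neg_mul (ha : -1 < a.re) (hz : 0 < z.re) :
    IntegrableOn (fun t : ℝ => (t : ℂ) ^ a * cexp (-(z * t))) (Ioi 0) := by
  refine (integrableOn_rpow_mul_exp_neg_mul ha hz).mono' (by fun_prop) ?_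
  filter_upwards [ae_restrict_mem measurableSet_Ioi] with t ht
  exact (norm_cpow_mul_cexp_neg_mul ht).le

lemma differentiableOn_integral_cpow_mul_cexp_neg_mul (ha : -1 < a.re) :
    DifferentiableOn ℂ (fun z => ∫ t : ℝ in Ioi 0, (t : ℂ) ^ a * cexp (-(z * t)))
      {z | 0 < z.re} := by
  intro z (hz : 0 < z.re)
  have hbound : IntegrableOn (fun t : ℝ => t ^ (a.re + 1) * Real.exp (-(z.re / 2) * t)) (Ioi 0) :=
    integrableOn_rpow_mul_exp_neg_mul (by linarith) (half_pos hz)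
  have hderiv := (_root_.hasDerivAt_integral_of_dominated_loc_of_deriv_le
    (s := {w : ℂ | z.re / 2 < w.re}) (F := fun w (t : ℝ) => (t : ℂ) ^ a * cexp (-(w * t)))
    (F' := fun w t => (t : ℂ) ^ a * (cexp (-(w * t)) * -(t : ℂ)))
    ((isOpen_re_gt _).mem_nhds (half_lt_self hz))
    (.of_forall fun w => by fun_prop)
    (integrableOn_cpow_mul_cexp_neg_mul ha hz) (by fun_prop) ?_ hbound ?_).2
  · exact hderiv.differentiableAt.differentiableWithinAt
  · filter_upwards [ae_restrict_mem measurableSet_Ioi] with t (ht : 0 < t) w (hw : z.re / 2 < w.re)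
    rw [← mul_assoc, norm_mul, norm_cpow_mul_cexp_neg_mul ht, norm_neg, Complex.norm_real,
      Real.norm_of_nonneg ht.le, mul_right_comm, ← Real.rpow_add_one ht.ne']
    gcongr
  · filter_upwards with t w _
    exact ((hasDerivAt_mul_const (t : ℂ)).fun_neg.cexp).const_mul _

lemma frequently_nhdsNE_ofReal {P : ℂ → Prop} {x : ℝ} (hP : ∃ᶠ r : ℝ in 𝓝[≠] x, P r) :
    ∃ᶠ z in 𝓝[≠] (x : ℂ), P z :=
  (continuous_ofReal.continuousWithinAt.tendsto_nhdsWithin fun _ hr =>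
    ofReal_injective.ne hr).frequently hP

lemma one_div_mem_slitPlane (hz : 0 ≤ z.re) (hz0 : z ≠ 0) : 1 / z ∈ slitPlane := by
  rw [one_div, mem_slitPlane_iff, inv_re, inv_im, neg_div]
  have hnormSq : 0 < normSq z := normSq_pos.2 hz0
  rcases hz.lt_or_eq with hre | hre
  · exact .inl (div_pos hre hnormSq)
  · exact .inr (neg_ne_zero.2 (div_ne_zero (fun him => hz0 (Complex.ext hre.symm him)) hnormSq.ne'))

lemma integral_cpow_mul_cexp_neg_mul_Ioi (ha : 0 < a.re) (hz : 0 < z.re) :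
    ∫ t : ℝ in Ioi 0, (t : ℂ) ^ (a - 1) * cexp (-(z * t)) = (1 / z) ^ a * Complex.Gamma a := by
  have hopen : IsOpen {z : ℂ | 0 < z.re} := isOpen_re_gt 0
  have hpow : DifferentiableOn ℂ (fun z : ℂ => (1 / z) ^ a * Complex.Gamma a) {z | 0 < z.re} := by
    intro w (hw : 0 < w.re)
    have hw0 : w ≠ 0 := by rintro rfl; simp at hw
    exact (((differentiableAt_const 1).div differentiableAt_id hw0).cpow_const
      (one_div_mem_slitPlane hw.le hw0)).mul_const _ |>.differentiableWithinAt
  have hreal : ∀ᶠ r : ℝ in 𝓝[≠] 1, ∫ t : ℝ in Ioi 0, (t : ℂ) ^ (a - 1) * cexp (-(r * t))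
      = (1 / (r : ℂ)) ^ a * Complex.Gamma a := by
    filter_upwards [nhdsWithin_le_nhds (Ioi_mem_nhds one_pos)] with r hr
    exact integral_cpow_mul_exp_neg_mul_Ioi ha hr
  exact ((differentiableOn_integral_cpow_mul_cexp_neg_mul (by simpa using ha)).analyticOnNhd
    hopen).eqOn_of_preconnected_of_frequently_eq (hpow.analyticOnNhd hopen)
    (convex_halfSpace_re_gt 0).isPreconnected (show 0 < ((1 : ℝ) : ℂ).re by simp)
    (frequently_nhdsNE_ofReal hreal.frequently) hz

lemma integral_cpow_mul_cexp_neg_mul_eq_by_parts (ha : a ≠ 1) (hz0 : z ≠ 0)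
    {R T : ℝ} (hR : 0 < R) (hRT : R ≤ T) :
    ∫ t in R..T, (t : ℂ) ^ (a - 1) * cexp (-(z * t))
      = ((R : ℂ) ^ (a - 1) * cexp (-(z * R)) - (T : ℂ) ^ (a - 1) * cexp (-(z * T))
        + (a - 1) * ∫ t in R..T, (t : ℂ) ^ (a - 2) * cexp (-(z * t))) / z := by
  have hpos : ∀ t ∈ uIcc R T, 0 < t := fun t ht =>
    hR.trans_le (by rw [uIcc_of_le hRT] at ht; exact ht.1)
  have hpow : ∀ t ∈ uIcc R T,
      HasDerivAt (fun t : ℝ => (t : ℂ) ^ (a - 1)) ((a - 1) * (t : ℂ) ^ (a - 2)) t := by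
    intro t ht
    convert! hasDerivAt_ofReal_cpow_const (hpos t ht).ne' (sub_ne_zero.2 ha) using 3
    ring
  have hexp : ∀ t ∈ uIcc R T,
      HasDerivAt (fun t : ℝ => -cexp (-(z * t)) / z) (cexp (-(z * t))) t := by
    intro t _
    convert! ((hasDerivAt_id t).ofReal_comp.const_mul z).fun_neg.cexp.fun_neg.div_const z using 1
    field_simp
    simp
  have hpow' : ContinuousOn (fun t : ℝ => (a - 1) * (t : ℂ) ^ (a - 2)) (uIcc R T) :=
    fun t ht => ((continuousAt_ofReal_cpow_const t _ (.inr (hpos t ht).ne')).const_mul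
      _).continuousWithinAt
  have hexp' : Continuous fun t : ℝ => cexp (-(z * t)) := by fun_prop
  have hrest : ∫ t in R..T, (a - 1) * (t : ℂ) ^ (a - 2) * (-cexp (-(z * t)) / z)
      = -(a - 1) / z * ∫ t in R..T, (t : ℂ) ^ (a - 2) * cexp (-(z * t)) := by
    rw [← intervalIntegral.integral_const_mul]
    congr 1 with t
    ring
  rw [intervalIntegral.integral_mul_deriv_eq_deriv_mul hpow hexp hpow'.intervalIntegrable
    (hexp'.intervalIntegrable R T), hrest]
  ring

lemma integral_rpow_sub_two_le {s : ℝ} (hs : s < 1) {R T : ℝ} (hR : 0 < R) (hRT : R ≤ T) :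
    ∫ t in R..T, t ^ (s - 2) ≤ R ^ (s - 1) / (1 - s) := by
  have h0 : (0 : ℝ) ∉ uIcc R T := fun h => by
    rw [uIcc_of_le hRT] at h
    exact hR.not_ge h.1
  rw [integral_rpow (.inr ⟨by linarith, h0⟩), show s - 2 + 1 = -(1 - s) by ring, div_neg, ← neg_div,
    neg_sub, neg_sub]
  have : 0 < 1 - s := sub_pos.2 hs
  gcongr
  exact sub_le_self _ (rpow_nonneg (hR.le.trans hRT) _)

lemma norm_integral_cpow_mul_cexp_neg_mul_le (ha : a.re < 1) (hz : 0 ≤ z.re) (hz0 : z ≠ 0)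
    {R T : ℝ} (hR : 0 < R) (hRT : R ≤ T) :
    ‖∫ t in R..T, (t : ℂ) ^ (a - 1) * cexp (-(z * t))‖
      ≤ (2 + ‖a - 1‖ / (1 - a.re)) * (R ^ (a.re - 1) / ‖z‖) := by
  have hkernel : ∀ {b : ℂ} {t : ℝ}, 0 < t → ‖(t : ℂ) ^ b * cexp (-(z * t))‖ ≤ t ^ b.re := by
    intro b t ht
    rw [norm_mul, norm_cpow_eq_rpow_re_of_pos ht]
    exact mul_le_of_le_one_right (by positivity) (norm_cexp_neg_mul_ofReal_le_one hz ht.le)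
  have hR' : ‖(R : ℂ) ^ (a - 1) * cexp (-(z * R))‖ ≤ R ^ (a.re - 1) := by
    simpa using hkernel (b := a - 1) hR
  have hT' : ‖(T : ℂ) ^ (a - 1) * cexp (-(z * T))‖ ≤ R ^ (a.re - 1) :=
    (hkernel (hR.trans_le hRT)).trans
      (by simpa using rpow_le_rpow_of_nonpos hR hRT (by linarith : a.re - 1 ≤ 0))
  have hint : ‖∫ t in R..T, (t : ℂ) ^ (a - 2) * cexp (-(z * t))‖ ≤ R ^ (a.re - 1) / (1 - a.re) := by
    refine (intervalIntegral.norm_integral_le_of_norm_le hRT (.of_forall fun t ht => ?_)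
      (intervalIntegrable_rpow (.inr ?_))).trans (integral_rpow_sub_two_le ha hR hRT)
    · simpa using hkernel (b := a - 2) (hR.trans ht.1)
    · rw [uIcc_of_le hRT]
      exact fun h => hR.not_ge h.1
  have ha1 : a ≠ 1 := by rintro rfl; simp at ha
  rw [integral_cpow_mul_cexp_neg_mul_eq_by_parts ha1 hz0 hR hRT, norm_div, ← mul_div_assoc]
  gcongr
  calc _ ≤ R ^ (a.re - 1) + R ^ (a.re - 1) + ‖a - 1‖ * (R ^ (a.re - 1) / (1 - a.re)) := by
        refine norm_add_le_of_le (norm_sub_le_of_le hR' hT') ?_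
        rw [norm_mul]
        gcongr
    _ = _ := by ring

lemma intervalIntegrable_cpow_mul_cexp_neg_mul (ha : -1 < a.re) (z : ℂ) (R T : ℝ) :
    IntervalIntegrable (fun t : ℝ => (t : ℂ) ^ a * cexp (-(z * t))) volume R T :=
  (intervalIntegrable_cpow' ha).mul_continuousOn (by fun_prop)

lemma norm_integral_sub_Gamma_le_of_re_pos (ha0 : 0 < a.re) (ha1 : a.re < 1) (hz : 0 < z.re)
    {R : ℝ} (hR : 0 < R) :
    ‖(∫ t in 0..R, (t : ℂ) ^ (a - 1) * cexp (-(z * t))) - (1 / z) ^ a * Complex.Gamma a‖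
      ≤ (2 + ‖a - 1‖ / (1 - a.re)) * (R ^ (a.re - 1) / ‖z‖) := by
  have ha : -1 < (a - 1).re := by simpa using ha0
  have hz0 : z ≠ 0 := by rintro rfl; simp at hz
  have hlim := intervalIntegral_tendsto_integral_Ioi 0
    (integrableOn_cpow_mul_cexp_neg_mul ha hz) tendsto_id
  rw [integral_cpow_mul_cexp_neg_mul_Ioi ha0 hz] at hlim
  rw [norm_sub_rev]
  refine le_of_tendsto (hlim.sub_const _).norm ?_
  filter_upwards [eventually_ge_atTop R] with T hRT
  rw [id, integral_interval_sub_left (intervalIntegrable_cpow_mul_cexp_neg_mul ha z 0 T)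
    (intervalIntegrable_cpow_mul_cexp_neg_mul ha z 0 R)]
  exact norm_integral_cpow_mul_cexp_neg_mul_le ha1 hz.le hz0 hR hRT

lemma continuousOn_integral_cpow_mul_cexp_neg_mul (ha : -1 < a.re) {R : ℝ} (hR : 0 ≤ R) :
    ContinuousOn (fun z => ∫ t in 0..R, (t : ℂ) ^ a * cexp (-(z * t))) {z | 0 ≤ z.re} := by
  simp only [integral_of_le hR]
  have hbound : IntegrableOn (fun t : ℝ => ‖(t : ℂ) ^ a‖) (Ioc 0 R) :=
    (intervalIntegrable_cpow' (a := 0) (b := R) ha).1.norm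
  refine continuousOn_of_dominated (fun z _ => by fun_prop) (fun z hz => ?_) hbound
    (.of_forall fun t => by fun_prop)
  filter_upwards [ae_restrict_mem measurableSet_Ioc] with t ht
  rw [norm_mul]
  exact mul_le_of_le_one_right (norm_nonneg _) (norm_cexp_neg_mul_ofReal_le_one hz ht.1.le)

lemma norm_integral_sub_Gamma_le (ha0 : 0 < a.re) (ha1 : a.re < 1) (hz : 0 ≤ z.re) (hz0 : z ≠ 0)
    {R : ℝ} (hR : 0 < R) :
    ‖(∫ t in 0..R, (t : ℂ) ^ (a - 1) * cexp (-(z * t))) - (1 / z) ^ a * Complex.Gamma a‖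
      ≤ (2 + ‖a - 1‖ / (1 - a.re)) * (R ^ (a.re - 1) / ‖z‖) := by
  have hF := ((continuousOn_integral_cpow_mul_cexp_neg_mul (a := a - 1) (by simpa using ha0)
    hR.le) z hz).mono fun w (hw : 0 < w.re) => hw.le
  refine ContinuousWithinAt.closure_le (s := {w : ℂ | 0 < w.re}) ?_ (hF.sub ?_).norm ?_
    fun w hw => norm_integral_sub_Gamma_le_of_re_pos ha0 ha1 hw hR
  · rwa [closure_setOfPred_lt_re]
  · exact (((continuousAt_const.div continuousAt_id hz0).cpow continuousAt_const
      (one_div_mem_slitPlane hz hz0)).mul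
      continuousAt_const).continuousWithinAt
  · exact (continuousAt_const.mul (continuousAt_const.div continuous_norm.continuousAt
      (norm_ne_zero_iff.2 hz0))).continuousWithinAt

theorem tendsto_integral_cpow_mul_cexp_neg_mul (ha0 : 0 < a.re) (ha1 : a.re < 1)
    (hz : 0 ≤ z.re) (hz0 : z ≠ 0) :
    Tendsto (fun R : ℝ => ∫ t in 0..R, (t : ℂ) ^ (a - 1) * cexp (-(z * t))) atTop
      (𝓝 ((1 / z) ^ a * Complex.Gamma a)) := by
  have hdecay : Tendsto (fun R : ℝ => R ^ (a.re - 1)) atTop (𝓝 0) := by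
    simpa using tendsto_rpow_neg_atTop (sub_pos.2 ha1)
  rw [tendsto_iff_norm_sub_tendsto_zero]
  refine squeeze_zero' (.of_forall fun _ => norm_nonneg _) ?_
    (by simpa using (hdecay.div_const ‖z‖).const_mul (2 + ‖a - 1‖ / (1 - a.re)))
  filter_upwards [eventually_gt_atTop 0] with R hR
  exact norm_integral_sub_Gamma_le ha0 ha1 hz hz0 hR

lemma ofReal_mul_I_cpow {r : ℝ} (hr : 0 < r) (a : ℝ) :
    ((r : ℂ) * I) ^ (a : ℂ) = (r ^ a : ℝ) * cexp ((π * a / 2 : ℝ) * I) := by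
  rw [cpow_def_of_ne_zero (by simp [hr.ne']), log_ofReal_mul hr I_ne_zero, log_I, add_mul,
    Complex.exp_add, ← ofReal_mul, ← ofReal_exp, ← Real.rpow_def_of_pos hr]
  congr 2
  push_cast
  ring

end HalfPlane

open Complex in
lemma tendsto_integral_rpow_mul_sin {a ω : ℝ} (ha0 : 0 < a) (ha1 : a < 1) (hω : 0 < ω) (c : ℝ) :
    Tendsto (fun R : ℝ => ∫ t in 0..R, t ^ (a - 1) * Real.sin (ω * t - c)) atTop
      (𝓝 (Real.Gamma a / ω ^ a * Real.sin (π * a / 2 - c))) := by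
  have hre : (-(ω * I)).re = 0 := by simp
  have hinv : 1 / -(ω * I) = (ω⁻¹ : ℝ) * I := by
    push_cast
    rw [one_div, ← mul_neg, mul_inv, inv_neg, inv_I, neg_neg]
  have hvalue : cexp (-(c * I)) * ((1 / -(ω * I)) ^ (a : ℂ) * Complex.Gamma a)
      = (Real.Gamma a / ω ^ a : ℝ) * cexp ((π * a / 2 - c : ℝ) * I) := by
    rw [hinv, ofReal_mul_I_cpow (inv_pos.2 hω), inv_rpow hω.le, Complex.Gamma_ofReal, ofReal_sub,
      sub_mul, sub_eq_add_neg, Complex.exp_add]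
    push_cast
    ring
  have hlim := (continuous_im.tendsto _).comp ((tendsto_integral_cpow_mul_cexp_neg_mul
    (a := (a : ℂ)) (z := -(ω * I)) ha0 ha1 hre.ge (by simp [hω.ne'])).const_mul (cexp (-(c * I))))
  rw [hvalue, im_ofReal_mul, exp_ofReal_mul_I_im] at hlim
  refine hlim.congr' ?_
  filter_upwards [eventually_ge_atTop 0] with R hR
  have hint := (intervalIntegrable_cpow_mul_cexp_neg_mul (a := (a : ℂ) - 1)
    (by simpa using ha0) (-(ω * I)) 0 R).const_mul (cexp (-(c * I)))
  rw [Function.comp, ← intervalIntegral.integral_const_mul, ← imCLM_apply,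
    ← imCLM.intervalIntegral_comp_comm hint]
  refine intervalIntegral.integral_congr fun t ht => ?_
  rw [uIcc_of_le hR] at ht
  simp only [imCLM_apply]
  rw [mul_left_comm, ← Complex.exp_add, ← ofReal_one, ← ofReal_sub, ← ofReal_cpow ht.1,
    im_ofReal_mul, ← exp_ofReal_mul_I_im]
  congr 3
  push_cast
  ring

lemma integral_rpow_smul_comp_rpow {E : Type*} [NormedAddCommGroup E] [NormedSpace ℝ E]
    (f : ℝ → E) (s : ℝ) {p : ℝ} (hp : 0 < p) {R : ℝ} (hR : 0 ≤ R) :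
    ∫ x in 0..R, x ^ s • f (x ^ p) = p⁻¹ • ∫ t in 0..R ^ p, t ^ ((s + 1) / p - 1) • f t := by
  have hmem : ∀ x ∈ Ioi (0 : ℝ), x ^ p ∈ Ioc 0 (R ^ p) ↔ x ∈ Ioc 0 R := fun x (hx : 0 < x) => by
    simp only [mem_Ioc, hx, rpow_pos_of_pos hx, true_and, rpow_le_rpow_iff hx.le hR hp]
  have hpow : ∀ x ∈ Ioi (0 : ℝ), x ^ (p - 1) * (x ^ p) ^ ((s + 1) / p - 1) = x ^ s :=
    fun x (hx : 0 < x) => by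
      rw [← rpow_mul hx.le, ← rpow_add hx]
      congr 1
      field_simp
      ring
  rw [integral_of_le hR, integral_of_le (rpow_nonneg hR p)]
  have hchange := integral_comp_rpow_Ioi_of_pos
    (g := (Ioc 0 (R ^ p)).indicator fun t => t ^ ((s + 1) / p - 1) • f t) hp
  have hIoc (b : ℝ) : Ioi 0 ∩ Ioc 0 b = Ioc 0 b := inter_eq_right.2 Ioc_subset_Ioi_self
  rw [setIntegral_indicator measurableSet_Ioc, hIoc] at hchange
  rw [← hchange, ← MeasureTheory.integral_smul, ← hIoc R, ← setIntegral_indicator measurableSet_Ioc]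
  refine setIntegral_congr_fun measurableSet_Ioi fun x hx => ?_
  by_cases hxR : x ∈ Ioc 0 R
  · simp only [indicator_of_mem hxR, indicator_of_mem ((hmem x hx).2 hxR)]
    rw [smul_smul, smul_smul, mul_assoc, mul_assoc, hpow x hx, inv_mul_cancel_left₀ hp.ne']
  · simp only [indicator_of_notMem hxR, indicator_of_notMem (mt (hmem x hx).1 hxR), smul_zero]

lemma tendsto_integral_rpow_mul_sin_rpow {p s ω : ℝ} (hs : -1 < s) (hsp : s < p - 1)
    (hω : 0 < ω) (c : ℝ) :
    Tendsto (fun R : ℝ => ∫ x in 0..R, x ^ s * Real.sin (ω * x ^ p - c)) atTop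
      (𝓝 (p⁻¹ * (Real.Gamma ((s + 1) / p) / ω ^ ((s + 1) / p)
        * Real.sin (π * ((s + 1) / p) / 2 - c)))) := by
  have hp : 0 < p := by linarith
  have hlim := ((tendsto_integral_rpow_mul_sin (a := (s + 1) / p) (div_pos (by linarith) hp)
    ((div_lt_one hp).2 (by linarith)) hω c).comp (tendsto_rpow_atTop hp)).const_mul p⁻¹
  refine hlim.congr' ?_
  filter_upwards [eventually_ge_atTop 0] with R hR
  exact (integral_rpow_smul_comp_rpow (fun t => Real.sin (ω * t - c)) s hp hR).symm

theorem generalized_scorerGi_at_zero (γ : ℝ) (hγ₁ : -1 < γ) (hγ₂ : γ < 2) :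
    Tendsto
      (fun R : ℝ => ∫ σ in (0 : ℝ)..R, σ ^ γ * Real.sin (σ ^ 3 / 3 - γ * π / 2))
      atTop
      (nhds (-Real.cos (π * (γ - 2) / 3) * (3 : ℝ) ^ ((γ - 2) / 3)
        * Real.Gamma ((γ + 1) / 3))) ∧
    Tendsto
      (fun R : ℝ => (1 / π) * ∫ σ in (0 : ℝ)..R, σ ^ γ * Real.sin (σ ^ 3 / 3 - γ * π / 2))
      atTop
      (nhds (-(1 / π) * Real.cos (π * (γ - 2) / 3) * (3 : ℝ) ^ ((γ - 2) / 3)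
        * Real.Gamma ((γ + 1) / 3))) := by
  have htrig : Real.sin (π * ((γ + 1) / 3) / 2 - γ * π / 2) = -Real.cos (π * (γ - 2) / 3) := by
    rw [← Real.cos_pi_div_two_sub, ← Real.cos_add_pi]
    congr 1
    ring
  have hconst : (3 : ℝ) ^ ((γ - 2) / 3) = 3⁻¹ / (1 / 3) ^ ((γ + 1) / 3) := by
    rw [one_div, inv_rpow three_pos.le, div_inv_eq_mul, mul_comm, ← div_eq_mul_inv,
      ← rpow_sub_one three_ne_zero]
    congr 1
    ring
  have hlim : Tendsto (fun R : ℝ => ∫ σ in 0..R, σ ^ γ * Real.sin (σ ^ 3 / 3 - γ * π / 2)) atTop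
      (𝓝 (-Real.cos (π * (γ - 2) / 3) * 3 ^ ((γ - 2) / 3) * Real.Gamma ((γ + 1) / 3))) := by
    convert! tendsto_integral_rpow_mul_sin_rpow (p := 3) (ω := 1 / 3) hγ₁ (by linarith)
      (by norm_num) (γ * π / 2) using 2
    · simp only [rpow_ofNat, one_div_mul_eq_div]
    · rw [htrig, hconst]
      ring
  refine ⟨hlim, ?_⟩
  convert! hlim.const_mul (1 / π) using 2
  ring
end

section
/- For every real γ > −1, define for μ ∈ {γ, γ+1, γ+2}: A_μ = −(1/π)·sin(π(μ−2)/3)·3^{(μ−2)/3}·Γ((μ+1)/3), G_μ = −(1/π)·cos(π(μ−2)/3)·3^{(μ−2)/3}·Γ((μ+1)/3), H_μ = (1/π)·3^{(μ−2)/3}·Γ((μ+1)/3). Then the 3×3 determinant det [[A_γ, G_γ, H_γ], [−A_{γ+1}, −G_{γ+1}, H_{γ+1}], [A_{γ+2}, G_{γ+2}, H_{γ+2}]] equals Γ(γ+1)/π². -/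
/-!
The value at `0` of `(Ai_μ, Gi_μ, Hi_μ)` is `Hi_μ(0) • (-sin θ, -cos θ, 1)` with
`θ = π (μ - 2) / 3`. Raising `μ` by one turns `θ` by `π / 3`, and together with the alternating
signs of the derivatives this makes the three rows multiples of `(sin φ, cos φ, 1)` with phases `φ`
spaced by `2 π / 3`. What is left after extracting the factors `Hi_μ(0)` is twice the area of an
equilateral triangle inscribed in the unit circle, and the product of these factors is a multiple of
`Γ(γ + 1)` by Gauss's multiplication formula.

Gauss's formula on the positive reals is the Bohr-Mollerup theorem, up to the constant
`∏ Γ(k / n)`, whose square is `∏ π / sin (π k / n)` by the reflection formula.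
-/

open Real

section GaussMultiplication

open Finset

theorem prod_sin_pi_mul_div (n : ℕ) :
    ∏ k ∈ range n, sin (π * (k + 1) / (n + 1)) = (n + 1) / 2 ^ n := by
  set ζ : ℂ := Complex.exp (2 * π * Complex.I / (n + 1 : ℕ)) with hζ
  have norm_one_sub_zeta_pow (k : ℕ) (hk : k ∈ range n) :
      ‖1 - ζ ^ (k + 1)‖ = 2 * sin (π * (k + 1) / (n + 1)) := by
    have hpow : ζ ^ (k + 1) = Complex.exp (Complex.I * (2 * (π * (k + 1) / (n + 1)) : ℝ)) := by
      rw [hζ, ← Complex.exp_nat_mul]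
      congr 1
      push_cast
      ring
    have hsin : 0 ≤ sin (π * (k + 1) / (n + 1)) := by
      have hkn : (k : ℝ) ≤ n := by exact_mod_cast (mem_range.mp hk).le
      refine sin_nonneg_of_nonneg_of_le_pi (by positivity) ?_
      rw [div_le_iff₀ (by positivity)]
      gcongr
    rw [hpow, norm_sub_rev, Complex.norm_exp_I_mul_ofReal_sub_one,
      mul_div_cancel_left₀ _ two_ne_zero, norm_of_nonneg (by positivity)]
  have hprod : ∏ k ∈ range n, (2 * sin (π * (k + 1) / (n + 1))) = n + 1 := by
    rw [← prod_congr rfl norm_one_sub_zeta_pow, ← norm_prod,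
      (Complex.isPrimitiveRoot_exp (n + 1) n.succ_ne_zero).prod_one_sub_pow_eq_order]
    exact_mod_cast Complex.norm_natCast (n + 1)
  rw [prod_mul_distrib, prod_const, card_range] at hprod
  rw [eq_div_iff (by positivity), mul_comm, hprod]

/-- The product `Γ(s / n) Γ((s + 1) / n) ⋯ Γ((s + n - 1) / n)` evaluated by Gauss's multiplication
formula. -/
noncomputable def gammaProd (n : ℕ) (s : ℝ) : ℝ :=
  ∏ k ∈ range n, Gamma ((s + k) / n)

theorem gammaProd_succ_one_sq (n : ℕ) :
    gammaProd (n + 1) 1 ^ 2 = (2 * π) ^ n / (n + 1) := by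
  set f : ℕ → ℝ := fun k => Gamma ((k + 1) / (n + 1)) with hf
  have hprod : gammaProd (n + 1) 1 = ∏ k ∈ range n, f k := by
    have hlast : ((n : ℝ) + 1) / (n + 1) = 1 := div_self (by positivity)
    simp only [gammaProd, prod_range_succ, Nat.cast_add, Nat.cast_one, add_comm (1 : ℝ), hlast,
      Gamma_one, mul_one, hf]
  have reflect (k : ℕ) (hk : k ∈ range n) :
      f k * f (n - 1 - k) = π / sin (π * (k + 1) / (n + 1)) := by
    have hkn : ((n - 1 - k : ℕ) : ℝ) = n - 1 - k := by
      rw [mem_range] at hk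
      rw [Nat.cast_sub (by lia), Nat.cast_sub (by lia), Nat.cast_one]
    rw [mul_div_assoc, ← Gamma_mul_Gamma_one_sub, hf]
    simp only [hkn]
    congr 2
    field_simp
    ring
  calc gammaProd (n + 1) 1 ^ 2 = (∏ k ∈ range n, f k) * ∏ k ∈ range n, f (n - 1 - k) := by
        rw [prod_range_reflect, hprod, sq]
    _ = ∏ k ∈ range n, π / sin (π * (k + 1) / (n + 1)) := by
        rw [← prod_mul_distrib, prod_congr rfl reflect]
    _ = (2 * π) ^ n / (n + 1) := by
        rw [prod_div_distrib, prod_sin_pi_mul_div, prod_const, card_range, mul_pow]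
        field_simp

theorem gammaProd_pos (n : ℕ) {s : ℝ} (hs : 0 < s) : 0 < gammaProd n s := by
  refine prod_pos fun k hk => Gamma_pos_of_pos ?_
  have hn : 0 < n := Nat.zero_lt_of_lt (mem_range.mp hk)
  positivity

theorem gammaProd_one {n : ℕ} (hn : n ≠ 0) :
    gammaProd n 1 = (2 * π) ^ (((n : ℝ) - 1) / 2) * (n : ℝ) ^ (-(1 / 2) : ℝ) := by
  obtain ⟨m, rfl⟩ := Nat.exists_eq_succ_of_ne_zero hn
  have hexp₁ : ((m.succ : ℝ) - 1) / 2 * (2 : ℕ) = m := by push_cast; ring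
  have hexp₂ : (-(1 / 2) : ℝ) * (2 : ℕ) = -1 := by norm_num
  rw [← sq_eq_sq₀ (gammaProd_pos _ one_pos).le (by positivity), gammaProd_succ_one_sq,
    mul_pow (_ ^ (_ : ℝ)), ← rpow_mul_natCast (by positivity), ← rpow_mul_natCast (by positivity),
    hexp₁, hexp₂, rpow_natCast, rpow_neg_one, Nat.cast_succ, div_eq_mul_inv]

theorem gammaProd_add_one {n : ℕ} (hn : n ≠ 0) {s : ℝ} (hs : s ≠ 0) :
    gammaProd n (s + 1) = s / n * gammaProd n s := by
  obtain ⟨m, rfl⟩ := Nat.exists_eq_succ_of_ne_zero hn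
  set d : ℝ := ((m + 1 : ℕ) : ℝ) with hd
  have hd0 : d ≠ 0 := by positivity
  have hlast : Gamma ((s + 1 + m) / d) = s / d * Gamma (s / d) := by
    rw [← Gamma_add_one (div_ne_zero hs hd0)]
    congr 1
    rw [hd]
    push_cast
    field_simp
    ring
  simp only [gammaProd, ← hd]
  rw [prod_range_succ, hlast, prod_range_succ']
  simp only [Nat.cast_add, Nat.cast_one, Nat.cast_zero, add_zero, add_assoc, add_comm (1 : ℝ)]
  ring

theorem convexOn_log_Gamma_add_div {c d : ℝ} (hc : 0 ≤ c) (hd : 0 < d) :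
    ConvexOn ℝ (Set.Ioi 0) fun s : ℝ => log (Gamma ((s + c) / d)) := by
  let φ : ℝ →ᵃ[ℝ] ℝ := d⁻¹ • (AffineMap.id ℝ ℝ + AffineMap.const ℝ ℝ c)
  have hφ (s : ℝ) : φ s = (s + c) / d := (div_eq_inv_mul _ _).symm
  have hφ_pos : Set.Ioi 0 ⊆ φ ⁻¹' Set.Ioi 0 := fun s (hs : 0 < s) => by
    rw [Set.mem_preimage, hφ]
    exact div_pos (by positivity) hd
  refine ((convexOn_log_Gamma.comp_affineMap φ).subset hφ_pos (convex_Ioi 0)).congr fun s _ => ?_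
  simp only [Function.comp_apply, hφ]

theorem convexOn_log_gammaProd (n : ℕ) : ConvexOn ℝ (Set.Ioi 0) (log ∘ gammaProd n) := by
  have hsum : ConvexOn ℝ (Set.Ioi 0) (∑ k ∈ range n, fun s : ℝ => log (Gamma ((s + k) / n))) :=
    sum_induction _ (ConvexOn ℝ (Set.Ioi 0)) (fun _ _ => ConvexOn.add)
      (convexOn_const 0 (convex_Ioi 0)) fun k hk => convexOn_log_Gamma_add_div k.cast_nonneg
        (Nat.cast_pos.mpr (Nat.zero_lt_of_lt (mem_range.mp hk)))
  refine hsum.congr fun s (hs : 0 < s) => ?_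
  rw [Finset.sum_apply, Function.comp_apply, gammaProd, log_prod fun k hk => ?_]
  have hn : 0 < n := Nat.zero_lt_of_lt (mem_range.mp hk)
  exact (Gamma_pos_of_pos (by positivity)).ne'

theorem eq_mul_rpow_mul_Gamma_of_log_convex {f : ℝ → ℝ} {c : ℝ} (hc : 0 < c)
    (hf_conv : ConvexOn ℝ (Set.Ioi 0) (log ∘ f))
    (hf_add_one : ∀ {s : ℝ}, 0 < s → f (s + 1) = s / c * f s)
    (hf_pos : ∀ {s : ℝ}, 0 < s → 0 < f s) {s : ℝ} (hs : 0 < s) :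
    f s = f 1 * c ^ (1 - s) * Gamma s := by
  have hf1 : 0 < f 1 := hf_pos one_pos
  let g : ℝ → ℝ := fun t => f t * (c ^ (t - 1) / f 1)
  have hg_conv : ConvexOn ℝ (Set.Ioi 0) (log ∘ g) := by
    have haffine : ConvexOn ℝ (Set.Ioi 0) fun t : ℝ => (t - 1) * log c - log (f 1) := by
      refine ⟨convex_Ioi 0, fun x _ y _ a b _ _ hab => le_of_eq ?_⟩
      simp only [smul_eq_mul]
      linear_combination (log c + log (f 1)) * hab
    refine (hf_conv.add haffine).congr fun t (ht : 0 < t) => ?_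
    have hft := hf_pos ht
    simp only [g, Pi.add_apply, Function.comp_apply]
    rw [log_mul (by positivity) (by positivity), log_div (by positivity) hf1.ne', log_rpow hc]
  have hg_add_one {t : ℝ} (ht : 0 < t) : g (t + 1) = t * g t := by
    simp only [g]
    rw [hf_add_one ht, add_sub_right_comm, rpow_add_one hc.ne']
    field_simp
  have hg_pos {t : ℝ} (ht : 0 < t) : 0 < g t := by
    have hft := hf_pos ht
    positivity
  have hg_one : g 1 = 1 := by simp [g, hf1.ne']
  rw [← eq_Gamma_of_log_convex hg_conv hg_add_one hg_pos hg_one hs, ← neg_sub s 1, rpow_neg hc.le]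
  simp only [g]
  field_simp

theorem gammaProd_eq_of_pos {n : ℕ} (hn : n ≠ 0) {s : ℝ} (hs : 0 < s) :
    gammaProd n s = (2 * π) ^ (((n : ℝ) - 1) / 2) * (n : ℝ) ^ (1 / 2 - s) * Gamma s := by
  have hn' : (0 : ℝ) < n := by positivity
  rw [eq_mul_rpow_mul_Gamma_of_log_convex hn' (convexOn_log_gammaProd n)
    (fun ht => gammaProd_add_one hn ht.ne') (gammaProd_pos n) hs, gammaProd_one hn,
    mul_assoc (_ ^ _) (_ ^ _) (_ ^ _), ← rpow_add hn']
  ring_nf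

theorem gammaProd_eq {n : ℕ} (hn : n ≠ 0) {s : ℝ} (hs : ∀ m : ℕ, s ≠ -m) :
    gammaProd n s = (2 * π) ^ (((n : ℝ) - 1) / 2) * (n : ℝ) ^ (1 / 2 - s) * Gamma s := by
  obtain ⟨N, hN⟩ := exists_nat_gt (-s)
  induction N generalizing s with
  | zero => exact gammaProd_eq_of_pos hn (by simpa using hN)
  | succ N ih =>
    have hs0 : s ≠ 0 := by simpa using hs 0
    have hstep := ih (s := s + 1)
      (fun m h => hs (m + 1) (by push_cast; linarith)) (by push_cast at hN; linarith)
    have hn' : (0 : ℝ) < n := by positivity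
    rw [gammaProd_add_one hn hs0, Gamma_add_one hs0, ← sub_sub, rpow_sub_one hn'.ne'] at hstep
    have hsn : s / n ≠ 0 := div_ne_zero hs0 hn'.ne'
    refine mul_left_cancel₀ hsn (hstep.trans ?_)
    ring

end GaussMultiplication

theorem det_mul_sin_mul_cos (r₁ r₂ r₃ θ₁ θ₂ θ₃ : ℝ) :
    Matrix.det !![r₁ * sin θ₁, r₁ * cos θ₁, r₁;
                  r₂ * sin θ₂, r₂ * cos θ₂, r₂;
                  r₃ * sin θ₃, r₃ * cos θ₃, r₃]
      = r₁ * r₂ * r₃ * (sin (θ₁ - θ₂) + sin (θ₂ - θ₃) + sin (θ₃ - θ₁)) := by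
  simp only [Matrix.det_fin_three, Matrix.of_apply, Matrix.cons_val', Matrix.cons_val_zero,
    Matrix.cons_val_one, Matrix.cons_val, sin_sub]
  ring

theorem sin_two_pi_div_three : sin (2 * π / 3) = √3 / 2 := by
  rw [← sin_pi_div_three, ← sin_pi_sub]
  ring_nf

theorem det_mul_sin_mul_cos_equilateral (r₁ r₂ r₃ θ : ℝ) :
    Matrix.det !![r₁ * sin θ, r₁ * cos θ, r₁;
                  r₂ * sin (θ - 2 * π / 3), r₂ * cos (θ - 2 * π / 3), r₂;
                  r₃ * sin (θ - 4 * π / 3), r₃ * cos (θ - 4 * π / 3), r₃]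
      = r₁ * r₂ * r₃ * (3 * √3 / 2) := by
  have h₁₂ : θ - (θ - 2 * π / 3) = 2 * π / 3 := by ring
  have h₂₃ : θ - 2 * π / 3 - (θ - 4 * π / 3) = 2 * π / 3 := by ring
  have h₃₁ : θ - 4 * π / 3 - θ = 2 * π / 3 - 2 * π := by ring
  rw [det_mul_sin_mul_cos, h₁₂, h₂₃, h₃₁, sin_sub_two_pi, sin_two_pi_div_three]
  ring

/-- The value `Hi_μ(0)` of the generalized Scorer function, the common amplitude of `Ai_μ(0)` and
`Gi_μ(0)`. -/
noncomputable def hiZero (μ : ℝ) : ℝ :=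
  1 / π * (3 : ℝ) ^ ((μ - 2) / 3) * Gamma ((μ + 1) / 3)

theorem hiZero_mul_hiZero_mul_hiZero {γ : ℝ} (hγ : ∀ m : ℕ, γ + 1 ≠ -m) :
    hiZero γ * hiZero (γ + 1) * hiZero (γ + 2) = 2 / (3 * √3) * (Gamma (γ + 1) / π ^ 2) := by
  have hΓ : Gamma ((γ + 1) / 3) * Gamma ((γ + 1 + 1) / 3) * Gamma ((γ + 2 + 1) / 3)
      = 2 * π * 3 ^ (1 / 2 - (γ + 1)) * Gamma (γ + 1) := by
    have hexp : (((3 : ℕ) : ℝ) - 1) / 2 = 1 := by norm_num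
    have h := gammaProd_eq three_ne_zero hγ
    rw [hexp, rpow_one] at h
    simp only [gammaProd, Finset.prod_range_succ, Finset.prod_range_zero, one_mul, Nat.cast_zero,
      Nat.cast_one, Nat.cast_ofNat, add_zero] at h
    rw [← h, add_right_comm γ 2 1]
  have hpow : (3 : ℝ) ^ ((γ - 2) / 3) * 3 ^ ((γ + 1 - 2) / 3) * 3 ^ ((γ + 2 - 2) / 3)
      * 3 ^ (1 / 2 - (γ + 1)) = 1 / (3 * √3) := by
    have hsqrt : 3 * √3 = (3 : ℝ) ^ (1 + 1 / 2 : ℝ) := by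
      rw [sqrt_eq_rpow, rpow_one_add' three_pos.le (by norm_num)]
    rw [hsqrt, one_div (_ ^ _), ← rpow_neg three_pos.le, ← rpow_add three_pos,
      ← rpow_add three_pos, ← rpow_add three_pos]
    ring_nf
  calc hiZero γ * hiZero (γ + 1) * hiZero (γ + 2)
      = 1 / π ^ 3 * ((3 : ℝ) ^ ((γ - 2) / 3) * 3 ^ ((γ + 1 - 2) / 3) * 3 ^ ((γ + 2 - 2) / 3))
        * (Gamma ((γ + 1) / 3) * Gamma ((γ + 1 + 1) / 3) * Gamma ((γ + 2 + 1) / 3)) := by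
        simp only [hiZero]
        ring
    _ = 2 * π / π ^ 3 * (1 / (3 * √3)) * Gamma (γ + 1) := by
        rw [hΓ, ← hpow]
        ring
    _ = 2 / (3 * √3) * (Gamma (γ + 1) / π ^ 2) := by field_simp

theorem wronskian_determinant_general (γ : ℝ) (hγ : ∀ m : ℕ, γ + 1 ≠ -m) (A G H : ℝ → ℝ)
    (hA : ∀ μ : ℝ, A μ = -(1 / π) * Real.sin (π * (μ - 2) / 3)
        * (3 : ℝ) ^ ((μ - 2) / 3) * Real.Gamma ((μ + 1) / 3))
    (hG : ∀ μ : ℝ, G μ = -(1 / π) * Real.cos (π * (μ - 2) / 3)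
        * (3 : ℝ) ^ ((μ - 2) / 3) * Real.Gamma ((μ + 1) / 3))
    (hH : ∀ μ : ℝ, H μ = (1 / π)
        * (3 : ℝ) ^ ((μ - 2) / 3) * Real.Gamma ((μ + 1) / 3)) :
    Matrix.det !![A γ, G γ, H γ;
                  -A (γ + 1), -G (γ + 1), H (γ + 1);
                  A (γ + 2), G (γ + 2), H (γ + 2)]
      = Real.Gamma (γ + 1) / π ^ 2 := by
  obtain rfl : H = hiZero := funext hH
  have hA_neg (μ : ℝ) : -A μ = hiZero μ * sin (π * (μ - 2) / 3) := by rw [hA, hiZero]; ring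
  have hG_neg (μ : ℝ) : -G μ = hiZero μ * cos (π * (μ - 2) / 3) := by rw [hG, hiZero]; ring
  have hA_add_pi (μ : ℝ) : A μ = hiZero μ * sin (π * (μ - 2) / 3 + π) := by
    rw [sin_add_pi, mul_neg, ← hA_neg, neg_neg]
  have hG_add_pi (μ : ℝ) : G μ = hiZero μ * cos (π * (μ - 2) / 3 + π) := by
    rw [cos_add_pi, mul_neg, ← hG_neg, neg_neg]
  set θ := π * (γ - 2) / 3 + π with hθ
  have hθ₂ : π * (γ + 1 - 2) / 3 = θ - 2 * π / 3 := by rw [hθ]; ring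
  have hθ₃ : π * (γ + 2 - 2) / 3 + π = θ - 4 * π / 3 + 2 * π := by rw [hθ]; ring
  rw [hA_neg, hG_neg, hA_add_pi, hG_add_pi, hA_add_pi, hG_add_pi, hθ₂, hθ₃, ← hθ, sin_add_two_pi,
    cos_add_two_pi, det_mul_sin_mul_cos_equilateral, hiZero_mul_hiZero_mul_hiZero hγ]
  field_simp

/-- The Wronskian determinant at `x = 0` of the fundamental system
`(Ai_γ, Gi_γ, Hi_γ)` of the ODE `(1+γ)u + x u' - u''' = 0`, computed from the
values `A μ = Ai_μ(0)`, `G μ = Gi_μ(0)`, `H μ = Hi_μ(0)`. -/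
theorem wronskian_determinant (γ : ℝ) (hγ : -1 < γ) (A G H : ℝ → ℝ)
    (hA : ∀ μ : ℝ, A μ = -(1 / π) * Real.sin (π * (μ - 2) / 3)
        * (3 : ℝ) ^ ((μ - 2) / 3) * Real.Gamma ((μ + 1) / 3))
    (hG : ∀ μ : ℝ, G μ = -(1 / π) * Real.cos (π * (μ - 2) / 3)
        * (3 : ℝ) ^ ((μ - 2) / 3) * Real.Gamma ((μ + 1) / 3))
    (hH : ∀ μ : ℝ, H μ = (1 / π)
        * (3 : ℝ) ^ ((μ - 2) / 3) * Real.Gamma ((μ + 1) / 3)) :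
    Matrix.det !![A γ, G γ, H γ;
                  -A (γ + 1), -G (γ + 1), H (γ + 1);
                  A (γ + 2), G (γ + 2), H (γ + 2)]
      = Real.Gamma (γ + 1) / π ^ 2 := by
  refine wronskian_determinant_general γ (fun m => ne_of_gt ?_) A G H hA hG hH
  linarith [m.cast_nonneg (α := ℝ)]
end

section
/- For every real γ with −1 < γ < 0 and every x ∈ ℝ, the following three Wronskian identities hold: (i) Ai_{γ+1}(x)·Gi_γ(x) − Ai_γ(x)·Gi_{γ+1}(x) = (Γ(1+γ)/π) · Ai_{−1−γ}(x); (ii) Ai_γ(x)·Hi_{γ+1}(x) + Ai_{γ+1}(x)·Hi_γ(x) = (Γ(1+γ)/π) · ( −cos(πγ)·Ai_{−1−γ}(x) − sin(πγ)·Gi_{−1−γ}(x) ); (iii) Gi_γ(x)·Hi_{γ+1}(x) + Gi_{γ+1}(x)·Hi_γ(x) = (Γ(1+γ)/π) · ( sin(πγ)·Ai_{−1−γ}(x) − cos(πγ)·Gi_{−1−γ}(x) + Hi_{−1−γ}(x) ). -/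
open Real MeasureTheory Filter intervalIntegral

/-!
The integral defining `Hi_μ` continues to an entire solution of `y''' = z y' + (μ + 1) y`. With
`ω = exp(2πi/3)`, rotating the contour of `∫ σ^μ exp(i(σ³/3 + xσ)) dσ` by the angle `π/6` gives
`Ai_μ(x) + i Gi_μ(x) = exp(i(π/6 - πμ/3)) Hi_μ(ωx)`, so the three identities are real and imaginary
parts of formulas for the Wronskian `W` of `Hi_γ(ωz)` and `Hi_γ(z)`, at `z = x` and `z = ωx`.

The Wronskian of two solutions of `y''' = z y' + c y` solves the adjoint equation
`y''' = z y' + (1 - c) y`. For `c = γ + 1` the latter is the equation of `Hi_{-1-γ}`, so `W` is a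
combination of `Hi_{-1-γ}(ωz)` and `Hi_{-1-γ}(z)` as soon as the 2-jets at `0` agree. These are
products of Gamma values at `(γ+1)/3`, `(γ+2)/3`, `(γ+3)/3`, evaluated by Gauss's multiplication
formula and the reflection formula.
-/

open Complex (I)
open scoped ComplexConjugate

/-! ### Gauss's multiplication formula -/

/-- The Bohr-Mollerup candidate `s ↦ n^(s-1) ∏ Γ((s+k)/n)` in Gauss's multiplication formula,
normalized to take the value `1` at `s = 1`. -/
noncomputable def gaussGamma (n : ℕ) (s : ℝ) : ℝ :=
  n ^ (s - 1) * (∏ k ∈ Finset.range n, Real.Gamma ((s + k) / n))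
    / ∏ k ∈ Finset.range n, Real.Gamma ((1 + k) / n)

lemma prod_Gamma_add_div_pos {n : ℕ} (hn : 0 < n) {s : ℝ} (hs : 0 < s) :
    0 < ∏ k ∈ Finset.range n, Real.Gamma ((s + k) / n) :=
  Finset.prod_pos fun _ _ => Real.Gamma_pos_of_pos (by positivity)

lemma gaussGamma_pos {n : ℕ} (hn : 0 < n) {s : ℝ} (hs : 0 < s) : 0 < gaussGamma n s := by
  have := prod_Gamma_add_div_pos hn hs
  have := prod_Gamma_add_div_pos hn one_pos
  unfold gaussGamma
  positivity

lemma gaussGamma_one {n : ℕ} (hn : 0 < n) : gaussGamma n 1 = 1 := by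
  have := (prod_Gamma_add_div_pos hn one_pos).ne'
  rw [gaussGamma, sub_self, Real.rpow_zero, one_mul, div_self this]

lemma gaussGamma_add_one {n : ℕ} (hn : 0 < n) {s : ℝ} (hs : 0 < s) :
    gaussGamma n (s + 1) = s * gaussGamma n s := by
  have hn' : (0 : ℝ) < n := by exact_mod_cast hn
  have hlast : Real.Gamma ((s + n) / n) = s / n * Real.Gamma (s / n) := by
    rw [add_div, div_self hn'.ne', Real.Gamma_add_one (by positivity)]
  have hshift : ∏ k ∈ Finset.range n, Real.Gamma ((s + 1 + k) / n)
      = s / n * ∏ k ∈ Finset.range n, Real.Gamma ((s + k) / n) := by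
    have hΓ : Real.Gamma (s / n) ≠ 0 := (Real.Gamma_pos_of_pos (by positivity)).ne'
    have h := (Finset.prod_range_succ' (fun k : ℕ => Real.Gamma ((s + k) / n)) n).symm.trans
      (Finset.prod_range_succ _ n)
    simp only [hlast, Nat.cast_zero, add_zero, Nat.cast_add, Nat.cast_one] at h
    simp only [add_assoc, add_comm (1 : ℝ)]
    apply mul_right_cancel₀ hΓ
    linear_combination h
  rw [gaussGamma, gaussGamma, hshift, add_sub_right_comm, Real.rpow_add_one hn'.ne']
  field_simp

lemma convexOn_log_gaussGamma {n : ℕ} (hn : 0 < n) :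
    ConvexOn ℝ (Set.Ioi 0) (Real.log ∘ gaussGamma n) := by
  have hn' : (0 : ℝ) < n := by exact_mod_cast hn
  have hΓ (k : ℕ) {s : ℝ} (hs : 0 < s) : Real.Gamma ((s + k) / n) ≠ 0 :=
    (Real.Gamma_pos_of_pos (by positivity)).ne'
  have hlogΓ (k : ℕ) : ConvexOn ℝ (Set.Ioi 0) fun s : ℝ => Real.log (Real.Gamma ((s + k) / n)) := by
    refine ⟨convex_Ioi 0, fun x (hx : 0 < x) y (hy : 0 < y) a b ha hb hab => ?_⟩
    have h := Real.convexOn_log_Gamma.2 (x := (x + k) / n) (y := (y + k) / n)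
      (Set.mem_Ioi.2 (by positivity)) (Set.mem_Ioi.2 (by positivity)) ha hb hab
    have harg : a • ((x + k) / n) + b • ((y + k) / n) = (a • x + b • y + k) / n := by
      simp only [smul_eq_mul]
      linear_combination (k / n : ℝ) * hab
    rwa [harg] at h
  have hsum : ConvexOn ℝ (Set.Ioi 0) fun s : ℝ =>
      ∑ k ∈ Finset.range n, Real.log (Real.Gamma ((s + k) / n)) := by
    induction Finset.range n using Finset.induction_on with
    | empty => simpa using convexOn_const (0 : ℝ) (convex_Ioi 0)
    | insert k t hk ih =>
      simp only [Finset.sum_insert hk]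
      exact (hlogΓ k).add ih
  have hlin : ConvexOn ℝ (Set.Ioi 0) fun s : ℝ => s * Real.log n :=
    (LinearMap.mulRight ℝ (Real.log n)).convexOn (convex_Ioi 0)
  set c := ∏ k ∈ Finset.range n, Real.Gamma ((1 + k) / n)
  refine ((hlin.add hsum).add_const (-Real.log n - Real.log c)).congr fun s (hs : 0 < s) => ?_
  rw [Function.comp_apply, gaussGamma, Real.log_div
    (mul_pos (by positivity) (prod_Gamma_add_div_pos hn hs)).ne'
    (prod_Gamma_add_div_pos hn one_pos).ne', Real.log_mul (by positivity)
    (prod_Gamma_add_div_pos hn hs).ne', Real.log_rpow hn', Real.log_prod fun k _ => hΓ k hs]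
  simp only [Pi.add_apply]
  ring

lemma prod_Gamma_add_div {n : ℕ} (hn : 0 < n) {s : ℝ} (hs : 0 < s) :
    ∏ k ∈ Finset.range n, Real.Gamma ((s + k) / n)
      = n ^ (1 - s) * (∏ k ∈ Finset.range n, Real.Gamma ((1 + k) / n)) * Real.Gamma s := by
  have hn' : (0 : ℝ) < n := by exact_mod_cast hn
  have hpow : (n : ℝ) ^ (1 - s) * n ^ (s - 1) = 1 := by
    rw [← Real.rpow_add hn', sub_add_sub_cancel, sub_self, Real.rpow_zero]
  rw [← Real.eq_Gamma_of_log_convex (convexOn_log_gaussGamma hn) (gaussGamma_add_one hn)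
    (gaussGamma_pos hn) (gaussGamma_one hn) hs, gaussGamma]
  field_simp [(prod_Gamma_add_div_pos hn one_pos).ne']
  exact hpow.symm

lemma Gamma_triplication {s : ℝ} (hs : 0 < s) :
    Real.Gamma (s / 3) * Real.Gamma ((s + 1) / 3) * Real.Gamma ((s + 2) / 3)
      = 2 * π / √3 * 3 ^ (1 - s) * Real.Gamma s := by
  have hconst : Real.Gamma (1 / 3) * Real.Gamma (2 / 3) = 2 * π / √3 := by
    have h := Real.Gamma_mul_Gamma_one_sub (1 / 3)
    rw [mul_one_div, Real.sin_pi_div_three, show (1 : ℝ) - 1 / 3 = 2 / 3 by norm_num] at h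
    rw [h]
    field_simp
  have h := prod_Gamma_add_div (n := 3) (by norm_num) hs
  simp only [Finset.prod_range_succ, Finset.prod_range_zero, one_mul, Nat.cast_zero, Nat.cast_one,
    Nat.cast_ofNat, add_zero, one_add_one_eq_two, show (1 + 2 : ℝ) / 3 = 1 by norm_num,
    Real.Gamma_one, mul_one, hconst] at h
  rw [h]
  ring

/-! ### The differential equation `y''' = z y' + c y` -/

/-- The entire function `y` satisfies `y''' = z y' + c y`, with first and second derivatives `y₁`
and `y₂`. Naming the derivatives avoids the operator `deriv` and its junk values. -/
structure IsAiryJet (c : ℂ) (y y₁ y₂ : ℂ → ℂ) : Prop where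
  hasDerivAt_zero : ∀ z, HasDerivAt y (y₁ z) z
  hasDerivAt_one : ∀ z, HasDerivAt y₁ (y₂ z) z
  hasDerivAt_two : ∀ z, HasDerivAt y₂ (z * y₁ z + c * y z) z

namespace IsAiryJet

variable {c : ℂ} {y y₁ y₂ v v₁ v₂ : ℂ → ℂ}

lemma const_mul (hy : IsAiryJet c y y₁ y₂) (a : ℂ) :
    IsAiryJet c (fun z => a * y z) (fun z => a * y₁ z) (fun z => a * y₂ z) where
  hasDerivAt_zero z := (hy.hasDerivAt_zero z).const_mul a
  hasDerivAt_one z := (hy.hasDerivAt_one z).const_mul a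
  hasDerivAt_two z := ((hy.hasDerivAt_two z).const_mul a).congr_deriv (by ring)

lemma sub (hy : IsAiryJet c y y₁ y₂) (hv : IsAiryJet c v v₁ v₂) :
    IsAiryJet c (fun z => y z - v z) (fun z => y₁ z - v₁ z) (fun z => y₂ z - v₂ z) where
  hasDerivAt_zero z := (hy.hasDerivAt_zero z).sub (hv.hasDerivAt_zero z)
  hasDerivAt_one z := (hy.hasDerivAt_one z).sub (hv.hasDerivAt_one z)
  hasDerivAt_two z := ((hy.hasDerivAt_two z).sub (hv.hasDerivAt_two z)).congr_deriv (by ring)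

lemma comp_const_mul (hy : IsAiryJet c y y₁ y₂) {w : ℂ} (hw : w ^ 3 = 1) :
    IsAiryJet c (fun z => y (w * z)) (fun z => w * y₁ (w * z)) (fun z => w ^ 2 * y₂ (w * z)) where
  hasDerivAt_zero z :=
    ((hy.hasDerivAt_zero (w * z)).comp z (hasDerivAt_const_mul w)).congr_deriv (by ring)
  hasDerivAt_one z := (((hy.hasDerivAt_one (w * z)).comp z
    (hasDerivAt_const_mul w)).const_mul w).congr_deriv (by ring)
  hasDerivAt_two z := (((hy.hasDerivAt_two (w * z)).comp z
    (hasDerivAt_const_mul w)).const_mul (w ^ 2)).congr_deriv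
      (by linear_combination (w * z * y₁ (w * z) + c * y (w * z)) * hw)

lemma deriv (hy : IsAiryJet c y y₁ y₂) :
    IsAiryJet (c + 1) y₁ y₂ (fun z => z * y₁ z + c * y z) where
  hasDerivAt_zero := hy.hasDerivAt_one
  hasDerivAt_one := hy.hasDerivAt_two
  hasDerivAt_two z := (((hasDerivAt_id z).mul (hy.hasDerivAt_one z)).add
    ((hy.hasDerivAt_zero z).const_mul c)).congr_deriv (by simp only [id]; ring)

/-- The Wronskian solves the adjoint equation. -/
lemma wronskian (hy : IsAiryJet c y y₁ y₂) (hv : IsAiryJet c v v₁ v₂) :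
    IsAiryJet (1 - c) (fun z => y z * v₁ z - y₁ z * v z) (fun z => y z * v₂ z - y₂ z * v z)
      (fun z => y₁ z * v₂ z - y₂ z * v₁ z + z * (y z * v₁ z - y₁ z * v z)) := by
  have h01 (z) := ((hy.hasDerivAt_zero z).mul (hv.hasDerivAt_one z)).sub
    ((hy.hasDerivAt_one z).mul (hv.hasDerivAt_zero z))
  have h02 (z) := ((hy.hasDerivAt_zero z).mul (hv.hasDerivAt_two z)).sub
    ((hy.hasDerivAt_two z).mul (hv.hasDerivAt_zero z))
  have h12 (z) := ((hy.hasDerivAt_one z).mul (hv.hasDerivAt_two z)).sub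
    ((hy.hasDerivAt_two z).mul (hv.hasDerivAt_one z))
  refine ⟨fun z => (h01 z).congr_deriv (by ring), fun z => (h02 z).congr_deriv (by ring),
    fun z => ((h12 z).add ((hasDerivAt_id z).mul (h01 z))).congr_deriv ?_⟩
  simp only [id, Pi.sub_apply, Pi.mul_apply]
  ring

lemma iteratedDeriv_zero_eq_zero (n : ℕ) (hy : IsAiryJet c y y₁ y₂) (h₀ : y 0 = 0) (h₁ : y₁ 0 = 0)
    (h₂ : y₂ 0 = 0) : iteratedDeriv n y 0 = 0 := by
  induction n generalizing c y y₁ y₂ with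
  | zero => rwa [iteratedDeriv_zero]
  | succ n ih =>
    rw [iteratedDeriv_succ', funext fun z => (hy.hasDerivAt_zero z).deriv]
    exact ih hy.deriv h₁ h₂ (by simp [h₀])

lemma eq_of_jet_zero_eq (hy : IsAiryJet c y y₁ y₂) (hv : IsAiryJet c v v₁ v₂) (h₀ : y 0 = v 0)
    (h₁ : y₁ 0 = v₁ 0) (h₂ : y₂ 0 = v₂ 0) (z : ℂ) : y z = v z := by
  have hsub := hy.sub hv
  have hd : Differentiable ℂ fun z => y z - v z := fun z =>
    (hsub.hasDerivAt_zero z).differentiableAt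
  rw [← sub_eq_zero, ← Complex.taylorSeries_eq_of_entire hd 0 z]
  simp [hsub.iteratedDeriv_zero_eq_zero _ (sub_eq_zero.2 h₀) (sub_eq_zero.2 h₁) (sub_eq_zero.2 h₂)]

end IsAiryJet

/-! ### The entire function `Hi_μ` -/

/-- The integrand `r^μ exp(-r³/3 + rz)` of `π Hi_μ(z)`, for complex `z`. -/
noncomputable def scorerIntegrand (μ : ℝ) (z : ℂ) (r : ℝ) : ℂ :=
  (r ^ μ : ℝ) * Complex.exp (-(r : ℂ) ^ 3 / 3 + r * z)

/-- The Scorer function `Hi_μ` continued from the real line to an entire function. -/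
noncomputable def complexScorerHi (μ : ℝ) (z : ℂ) : ℂ :=
  1 / π * ∫ r in Set.Ioi (0 : ℝ), scorerIntegrand μ z r

lemma complexScorerHi_ofReal (μ x : ℝ) : complexScorerHi μ x = scorerHi μ x := by
  rw [scorerHi, complexScorerHi, Complex.ofReal_mul, ← integral_complex_ofReal]
  push_cast
  rfl

lemma complexScorerHi_conj (μ : ℝ) (z : ℂ) :
    complexScorerHi μ (conj z) = conj (complexScorerHi μ z) := by
  simp only [complexScorerHi, scorerIntegrand, map_mul, map_div₀, map_one, Complex.conj_ofReal,
    ← integral_conj, ← Complex.exp_conj, map_add, map_neg, map_pow, Complex.conj_ofNat]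

section Integrand

variable {μ : ℝ} (z : ℂ) {r : ℝ}

lemma norm_scorerIntegrand (hr : 0 < r) :
    ‖scorerIntegrand μ z r‖ = r ^ μ * Real.exp (-r ^ 3 / 3 + r * z.re) := by
  have hre : (-(r : ℂ) ^ 3 / 3 + r * z).re = -r ^ 3 / 3 + r * z.re := by
    rw [Complex.add_re, Complex.re_ofReal_mul]
    norm_cast
  rw [scorerIntegrand, norm_mul, Complex.norm_exp, Complex.norm_real,
    Real.norm_of_nonneg (Real.rpow_nonneg hr.le μ), hre]

lemma continuousAt_scorerIntegrand (h : r ≠ 0 ∨ 0 ≤ μ) : ContinuousAt (scorerIntegrand μ z) r :=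
  (Complex.continuous_ofReal.continuousAt.comp (Real.continuousAt_rpow_const _ _ h)).mul
    (by fun_prop)

lemma aestronglyMeasurable_scorerIntegrand :
    AEStronglyMeasurable (scorerIntegrand μ z) (volume.restrict (Set.Ioi 0)) :=
  ContinuousOn.aestronglyMeasurable (fun _ hr =>
    (continuousAt_scorerIntegrand z (Or.inl (ne_of_gt hr))).continuousWithinAt) measurableSet_Ioi

/-- Young's inequality `r s² ≤ r³/3 + 2 s³/3`, at `s = |c| + 1`. -/
lemma neg_cube_div_three_add_mul_le (hr : 0 ≤ r) (c : ℝ) :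
    -r ^ 3 / 3 + r * c ≤ (|c| + 1) ^ 3 / 3 + -(1 / 6) * r ^ 3 := by
  have hYoung : 0 ≤ (r - (|c| + 1)) ^ 2 * (r + 2 * (|c| + 1)) := by positivity
  have hc : r * c ≤ r * ((|c| + 1) ^ 2 / 2) := by
    gcongr
    nlinarith [le_abs_self c, abs_nonneg c]
  linarith

lemma integrableOn_scorerIntegrand (hμ : -1 < μ) :
    IntegrableOn (scorerIntegrand μ z) (Set.Ioi 0) := by
  have hbound := (integrableOn_rpow_mul_exp_neg_mul_rpow (p := 3) (b := 1 / 6) hμ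
    (by norm_num) (by norm_num)).const_mul (Real.exp ((|z.re| + 1) ^ 3 / 3))
  refine Integrable.mono' hbound (aestronglyMeasurable_scorerIntegrand z) ?_
  filter_upwards [ae_restrict_mem measurableSet_Ioi] with r (hr : 0 < r)
  rw [norm_scorerIntegrand z hr, mul_left_comm, ← Real.exp_add, Real.rpow_ofNat]
  exact mul_le_mul_of_nonneg_left (Real.exp_le_exp.2 (neg_cube_div_three_add_mul_le hr.le z.re))
    (Real.rpow_nonneg hr.le μ)

lemma hasDerivAt_scorerIntegrand_left (hr : 0 < r) :
    HasDerivAt (fun w => scorerIntegrand μ w r) (scorerIntegrand (μ + 1) z r) z := by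
  have hexp : HasDerivAt (fun w : ℂ => -(r : ℂ) ^ 3 / 3 + r * w) (r : ℂ) z :=
    (hasDerivAt_const_mul (r : ℂ)).const_add _
  refine (hexp.cexp.const_mul ((r ^ μ : ℝ) : ℂ)).congr_deriv ?_
  rw [scorerIntegrand, Real.rpow_add_one hr.ne']
  push_cast
  ring

lemma hasDerivAt_scorerIntegrand_right (hr : 0 < r) :
    HasDerivAt (scorerIntegrand (μ + 1) z)
      ((μ + 1) * scorerIntegrand μ z r + z * scorerIntegrand (μ + 1) z r
        - scorerIntegrand (μ + 3) z r) r := by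
  have hpow := (Real.hasDerivAt_rpow_const (p := μ + 1) (Or.inl hr.ne')).ofReal_comp
  have hexponent : HasDerivAt (fun w : ℂ => -w ^ 3 / 3 + w * z) (-r ^ 2 + z) (r : ℂ) := by
    refine (((hasDerivAt_pow 3 (r : ℂ)).neg.div_const 3).add
      (hasDerivAt_mul_const z)).congr_deriv ?_
    push_cast
    ring
  refine (hpow.mul hexponent.cexp.comp_ofReal).congr_deriv ?_
  simp only [scorerIntegrand]
  rw [add_sub_cancel_right, Real.rpow_add_one hr.ne', Real.rpow_add hr μ 3, Real.rpow_ofNat]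
  push_cast
  ring

end Integrand

section

variable {μ : ℝ} (hμ : -1 < μ) (z : ℂ)
include hμ

lemma hasDerivAt_complexScorerHi :
    HasDerivAt (complexScorerHi μ) (complexScorerHi (μ + 1) z) z := by
  have hbound : ∀ᵐ r ∂volume.restrict (Set.Ioi 0), ∀ w ∈ Metric.ball z 1,
      ‖scorerIntegrand (μ + 1) w r‖ ≤ ‖scorerIntegrand (μ + 1) (z + 1) r‖ := by
    filter_upwards [ae_restrict_mem measurableSet_Ioi] with r (hr : 0 < r) w hw
    have hre : w.re ≤ (z + 1).re := by
      rw [Metric.mem_ball, dist_eq_norm] at hw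
      have h := (Complex.re_le_norm (w - z)).trans hw.le
      rw [Complex.sub_re] at h
      rw [Complex.add_re, Complex.one_re]
      linarith
    rw [norm_scorerIntegrand w hr, norm_scorerIntegrand (z + 1) hr]
    gcongr
  refine (hasDerivAt_integral_of_dominated_loc_of_deriv_le (Metric.ball_mem_nhds z one_pos)
    (Eventually.of_forall fun w => aestronglyMeasurable_scorerIntegrand w)
    (integrableOn_scorerIntegrand z hμ) (aestronglyMeasurable_scorerIntegrand z) hbound
    (integrableOn_scorerIntegrand (z + 1) (by linarith)).norm ?_).2.const_mul _
  filter_upwards [ae_restrict_mem measurableSet_Ioi] with r hr w _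
  exact hasDerivAt_scorerIntegrand_left w hr

lemma complexScorerHi_add_three :
    complexScorerHi (μ + 3) z
      = z * complexScorerHi (μ + 1) z + (μ + 1) * complexScorerHi μ z := by
  have hint₀ := (integrableOn_scorerIntegrand z hμ).const_mul ((μ : ℂ) + 1)
  have hint₁ := integrableOn_scorerIntegrand (μ := μ + 1) z (by linarith)
  have hint₀₁ : IntegrableOn (fun r => ((μ : ℂ) + 1) * scorerIntegrand μ z r
      + z * scorerIntegrand (μ + 1) z r) (Set.Ioi 0) := hint₀.add (hint₁.const_mul z)
  have hint₃ := integrableOn_scorerIntegrand (μ := μ + 3) z (by linarith)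
  have hderiv : ∀ r ∈ Set.Ioi (0 : ℝ), HasDerivAt (scorerIntegrand (μ + 1) z) _ r :=
    fun r hr => hasDerivAt_scorerIntegrand_right z hr
  have hintD := hint₀₁.sub hint₃
  have hzero : scorerIntegrand (μ + 1) z 0 = 0 := by
    rw [scorerIntegrand, Real.zero_rpow (by linarith), Complex.ofReal_zero, zero_mul]
  have h := integral_Ioi_of_hasDerivAt_of_tendsto
    (continuousAt_scorerIntegrand z (Or.inr (by linarith))).continuousWithinAt hderiv hintD
    (tendsto_zero_of_hasDerivAt_of_integrableOn_Ioi hderiv hintD hint₁)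
  rw [integral_sub hint₀₁ hint₃, integral_add hint₀ (hint₁.const_mul z),
    MeasureTheory.integral_const_mul, MeasureTheory.integral_const_mul, hzero] at h
  unfold complexScorerHi
  linear_combination -(1 / π : ℂ) * h

omit z in
lemma isAiryJet_complexScorerHi :
    IsAiryJet (μ + 1) (complexScorerHi μ) (complexScorerHi (μ + 1)) (complexScorerHi (μ + 2)) where
  hasDerivAt_zero := hasDerivAt_complexScorerHi hμ
  hasDerivAt_one z := (hasDerivAt_complexScorerHi (μ := μ + 1) (by linarith) z).congr_deriv
    (by ring_nf)
  hasDerivAt_two z := by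
    have h := hasDerivAt_complexScorerHi (μ := μ + 2) (by linarith) z
    rwa [show μ + 2 + 1 = μ + 3 by ring, complexScorerHi_add_three hμ] at h

lemma scorerHi_zero : scorerHi μ 0 = 3 ^ ((μ - 2) / 3) / π * Real.Gamma ((μ + 1) / 3) := by
  have h := integral_rpow_mul_exp_neg_mul_rpow (p := 3) (b := 1 / 3) (by norm_num) hμ (by norm_num)
  have hpow : (1 / 3 : ℝ) ^ (-(μ + 1) / 3) * (1 / 3) = 3 ^ ((μ - 2) / 3) := by
    rw [one_div, Real.inv_rpow (by norm_num), ← Real.rpow_neg (by norm_num),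
      ← Real.rpow_neg_one 3, ← Real.rpow_add (by norm_num)]
    ring_nf
  rw [hpow] at h
  rw [div_mul_eq_mul_div, ← h, scorerHi, one_div_mul_eq_div]
  congr 1
  refine setIntegral_congr_fun measurableSet_Ioi fun r _ => ?_
  simp only [Real.rpow_ofNat]
  ring_nf

end

/-! ### Values at the origin -/

lemma scorerHi_zero_reflection {ν : ℝ} (h₁ : -1 < ν) (h₂ : ν < 2) :
    Real.sin (π * (ν + 1) / 3) * scorerHi ν 0 * scorerHi (1 - ν) 0 = 1 / (3 * π) := by
  have hsin : 0 < Real.sin (π * (ν + 1) / 3) :=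
    Real.sin_pos_of_pos_of_lt_pi (div_pos (mul_pos Real.pi_pos (by linarith)) three_pos)
      (by nlinarith [Real.pi_pos])
  have hΓ := Real.Gamma_mul_Gamma_one_sub ((ν + 1) / 3)
  have hpow : (3 : ℝ) ^ ((ν - 2) / 3) * 3 ^ ((1 - ν - 2) / 3) = 1 / 3 := by
    rw [← Real.rpow_add (by norm_num), show (ν - 2) / 3 + (1 - ν - 2) / 3 = -1 by ring,
      Real.rpow_neg_one, one_div]
  rw [show 1 - (ν + 1) / 3 = (1 - ν + 1) / 3 by ring, ← mul_div_assoc, eq_div_iff hsin.ne'] at hΓ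
  rw [scorerHi_zero h₁, scorerHi_zero (by linarith)]
  field_simp
  linear_combination 3 * 3 ^ ((ν - 2) / 3) * 3 ^ ((1 - ν - 2) / 3) * hΓ + 3 * π * hpow

lemma scorerHi_zero_triplication {γ : ℝ} (hγ : -1 < γ) :
    scorerHi γ 0 * scorerHi (γ + 1) 0 * scorerHi (γ + 2) 0
      = 2 * Real.Gamma (1 + γ) / (3 * √3 * π ^ 2) := by
  have hΓ := Gamma_triplication (s := γ + 1) (by linarith)
  have hpow : (3 : ℝ) ^ ((γ - 2) / 3) * 3 ^ ((γ + 1 - 2) / 3) * 3 ^ ((γ + 2 - 2) / 3)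
      * 3 ^ (1 - (γ + 1)) = 1 / 3 := by
    simp only [← Real.rpow_add (three_pos : (0 : ℝ) < 3)]
    rw [one_div, ← Real.rpow_neg_one]
    congr 1
    ring
  rw [scorerHi_zero hγ, scorerHi_zero (by linarith), scorerHi_zero (by linarith),
    add_right_comm γ 2 1, add_assoc γ 1 1, one_add_one_eq_two, add_comm 1 γ]
  rw [add_assoc γ 1 1, one_add_one_eq_two] at hΓ
  calc _ = 3 ^ ((γ - 2) / 3) * 3 ^ ((γ + 1 - 2) / 3) * 3 ^ ((γ + 2 - 2) / 3) / π ^ 3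
        * (Real.Gamma ((γ + 1) / 3) * Real.Gamma ((γ + 2) / 3) * Real.Gamma ((γ + 1 + 2) / 3)) := by
        ring
    _ = 3 ^ ((γ - 2) / 3) * 3 ^ ((γ + 1 - 2) / 3) * 3 ^ ((γ + 2 - 2) / 3) * 3 ^ (1 - (γ + 1))
        * (2 * Real.Gamma (γ + 1) / (√3 * π ^ 2)) := by
        rw [hΓ]
        field_simp
    _ = 2 * Real.Gamma (γ + 1) / (3 * √3 * π ^ 2) := by
        rw [hpow]
        ring

/-! ### The Wronskian of `Hi_γ(ωz)` and `Hi_γ(z)` -/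

/-- The primitive cube root of unity `ω = exp(2πi/3)`. -/
noncomputable def ω₃ : ℂ := Complex.exp (2 * π / 3 * I)

lemma ω₃_eq : ω₃ = -1 / 2 + √3 / 2 * I := by
  have harg : (2 * π / 3 : ℂ) = (π - π / 3 : ℝ) := by push_cast; ring
  rw [ω₃, harg, Complex.exp_mul_I, ← Complex.ofReal_cos, ← Complex.ofReal_sin, Real.cos_pi_sub,
    Real.sin_pi_sub, Real.cos_pi_div_three, Real.sin_pi_div_three]
  push_cast
  ring

lemma ω₃_pow_three : ω₃ ^ 3 = 1 := by
  rw [ω₃, ← Complex.exp_nat_mul, ← Complex.exp_two_pi_mul_I]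
  congr 1
  push_cast
  ring

lemma ω₃_sq : ω₃ ^ 2 = -1 / 2 - √3 / 2 * I := by
  have h3 : (√3 : ℂ) ^ 2 = 3 := by exact_mod_cast Real.sq_sqrt (by norm_num : (0 : ℝ) ≤ 3)
  rw [ω₃_eq]
  linear_combination 1 / 4 * (√3 : ℂ) ^ 2 * Complex.I_sq - 1 / 4 * h3

lemma conj_ω₃ : conj ω₃ = ω₃ ^ 2 := by
  rw [ω₃_sq, ω₃_eq]
  simp only [map_add, map_mul, map_div₀, map_neg, map_one, Complex.conj_I, Complex.conj_ofReal,
    Complex.conj_ofNat]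
  ring

lemma exp_pi_div_three_mul_I : Complex.exp (π / 3 * I) = -ω₃ ^ 2 := by
  have harg : (π / 3 : ℂ) * I = 2 * (2 * π / 3 * I) - π * I := by ring
  rw [harg, Complex.exp_sub, Complex.exp_pi_mul_I, ω₃, ← Complex.exp_nat_mul, div_neg, div_one]
  norm_cast

section

variable {γ : ℝ}

/-- Dividing the triplication formula by the reflection formula at `ι` removes the factor
`Hi_ι(0)`. -/
lemma scorerHi_zero_mul_eq {ι p : ℝ} (h₁ : -1 < ι) (h₂ : ι < 2)
    (h : p * scorerHi ι 0 = 2 * Real.Gamma (1 + γ) / (3 * √3 * π ^ 2)) :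
    √3 * p = Real.Gamma (1 + γ) / π * (2 * Real.sin (π * (ι + 1) / 3)) * scorerHi (1 - ι) 0 := by
  have hrefl := scorerHi_zero_reflection h₁ h₂
  have hπ := Real.pi_ne_zero
  calc √3 * p = 3 * π * √3 * p * (1 / (3 * π)) := by field_simp
    _ = 3 * π * √3 * Real.sin (π * (ι + 1) / 3) * (p * scorerHi ι 0) * scorerHi (1 - ι) 0 := by
      rw [← hrefl]
      ring
    _ = _ := by
      rw [h]
      field_simp

lemma complexScorerHi_zero_mul_eq {ι p : ℝ} (h₁ : -1 < ι) (h₂ : ι < 2)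
    (h : p * scorerHi ι 0 = 2 * Real.Gamma (1 + γ) / (3 * √3 * π ^ 2)) :
    (ω₃ - ω₃ ^ 2) * p = Real.Gamma (1 + γ) / π
      * (Complex.exp (π * (ι + 1) / 3 * I) - Complex.exp (-(π * (ι + 1) / 3) * I))
      * complexScorerHi (1 - ι : ℝ) 0 := by
  have hreal := congrArg Complex.ofReal (scorerHi_zero_mul_eq h₁ h₂ h)
  have hsin := Complex.two_sin (π * (ι + 1) / 3 : ℂ)
  rw [← Complex.ofReal_zero, complexScorerHi_ofReal]
  push_cast at hreal
  rw [ω₃_sq, ω₃_eq]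
  rw [hsin] at hreal
  linear_combination I * hreal - (Real.Gamma (1 + γ) / π
      * (Complex.exp (π * (ι + 1) / 3 * I) - Complex.exp (-(π * (ι + 1) / 3) * I))
      * scorerHi (1 - ι : ℝ) 0) * Complex.I_sq

lemma exp_pi_mul_add_one_div_three (s : ℂ) :
    Complex.exp (π * (s + 1) / 3 * I) = -ω₃ ^ 2 * Complex.exp (π * s / 3 * I) := by
  rw [← exp_pi_div_three_mul_I, ← Complex.exp_add]
  ring_nf

lemma exp_neg_pi_mul_add_one_div_three (s : ℂ) :
    Complex.exp (-(π * (s + 1) / 3) * I) = -ω₃ * Complex.exp (-(π * s / 3) * I) := by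
  have hneg := exp_pi_mul_add_one_div_three (-(s + 1))
  rw [neg_add_rev, neg_add_cancel_comm] at hneg
  have hs : (π * (-1 + -s) / 3 * I : ℂ) = -(π * (s + 1) / 3) * I := by ring
  have hs' : (π * -s / 3 * I : ℂ) = -(π * s / 3) * I := by ring
  rw [hs, hs'] at hneg
  rw [hneg]
  linear_combination -Complex.exp (-(π * (s + 1) / 3) * I) * ω₃_pow_three

lemma complexScorerHi_zero_mul_add_one (hγ₁ : -1 < γ) (hγ₂ : γ < 0) :
    (ω₃ - ω₃ ^ 2) * (complexScorerHi γ 0 * complexScorerHi (γ + 1) 0)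
      = Real.Gamma (1 + γ) / π
        * (Complex.exp (-(π * γ / 3) * I) - Complex.exp (π * γ / 3 * I))
        * complexScorerHi (-1 - γ) 0 := by
  have h := complexScorerHi_zero_mul_eq (by linarith) (by linarith)
    (scorerHi_zero_triplication hγ₁)
  rw [show 1 - (γ + 2) = -1 - γ by ring] at h
  push_cast [← complexScorerHi_ofReal] at h
  rw [show (γ + 2 + 1 : ℂ) = γ + 1 + 1 + 1 by ring] at h
  simp only [exp_pi_mul_add_one_div_three, exp_neg_pi_mul_add_one_div_three] at h
  rw [h]
  linear_combination (Real.Gamma (1 + γ) / π * (Complex.exp (-(π * γ / 3) * I)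
    - (ω₃ ^ 3 + 1) * Complex.exp (π * γ / 3 * I)) * complexScorerHi (-1 - γ) 0) * ω₃_pow_three

lemma complexScorerHi_zero_mul_add_two (hγ₁ : -1 < γ) (hγ₂ : γ < 0) :
    (ω₃ - ω₃ ^ 2) * (complexScorerHi γ 0 * complexScorerHi (γ + 2) 0)
      = Real.Gamma (1 + γ) / π
        * (ω₃ * Complex.exp (π * γ / 3 * I) - ω₃ ^ 2 * Complex.exp (-(π * γ / 3) * I))
        * complexScorerHi (-1 - γ + 1) 0 := by
  have h := complexScorerHi_zero_mul_eq (ι := γ + 1) (by linarith) (by linarith)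
    ((mul_right_comm _ _ _).trans (scorerHi_zero_triplication hγ₁))
  rw [show 1 - (γ + 1) = -1 - γ + 1 by ring] at h
  push_cast [← complexScorerHi_ofReal] at h
  simp only [exp_pi_mul_add_one_div_three, exp_neg_pi_mul_add_one_div_three] at h
  rw [h]
  linear_combination (Real.Gamma (1 + γ) / π * ω₃ * Complex.exp (π * γ / 3 * I)
    * complexScorerHi (-1 - γ + 1) 0) * ω₃_pow_three

lemma complexScorerHi_add_one_zero_mul_add_two (hγ₁ : -1 < γ) (hγ₂ : γ < 0) :
    (ω₃ - ω₃ ^ 2) * (complexScorerHi (γ + 1) 0 * complexScorerHi (γ + 2) 0)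
      = Real.Gamma (1 + γ) / π
        * (ω₃ * Complex.exp (-(π * γ / 3) * I) - ω₃ ^ 2 * Complex.exp (π * γ / 3 * I))
        * complexScorerHi (-1 - γ + 2) 0 := by
  have h := complexScorerHi_zero_mul_eq (ι := γ) hγ₁ (by linarith)
    ((mul_comm _ _).trans ((mul_assoc _ _ _).symm.trans (scorerHi_zero_triplication hγ₁)))
  rw [show 1 - γ = -1 - γ + 2 by ring] at h
  push_cast [← complexScorerHi_ofReal] at h
  simp only [exp_pi_mul_add_one_div_three, exp_neg_pi_mul_add_one_div_three] at h
  rw [h]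
  ring

theorem complexScorerHi_wronskian (hγ₁ : -1 < γ) (hγ₂ : γ < 0) (z : ℂ) :
    complexScorerHi γ (ω₃ * z) * complexScorerHi (γ + 1) z
        - ω₃ * complexScorerHi (γ + 1) (ω₃ * z) * complexScorerHi γ z
      = ω₃ ^ 2 * (Real.Gamma (1 + γ) / π)
        * (Complex.exp (-(π * γ / 3) * I) * complexScorerHi (-1 - γ) (ω₃ * z)
          - Complex.exp (π * γ / 3 * I) * complexScorerHi (-1 - γ) z) := by
  have hjet := isAiryJet_complexScorerHi hγ₁
  have hadj := isAiryJet_complexScorerHi (μ := -1 - γ) (by linarith)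
  have hc : ((-1 - γ : ℝ) : ℂ) + 1 = 1 - (γ + 1) := by push_cast; ring
  rw [hc] at hadj
  have hW := (hjet.comp_const_mul ω₃_pow_three).wronskian hjet
  have hV := (((hadj.comp_const_mul ω₃_pow_three).const_mul (Complex.exp (-(π * γ / 3) * I))).sub
    (hadj.const_mul (Complex.exp (π * γ / 3 * I)))).const_mul
      (ω₃ ^ 2 * (Real.Gamma (1 + γ) / π))
  refine hW.eq_of_jet_zero_eq hV ?_ ?_ ?_ z
  · simp only [mul_zero]
    linear_combination ω₃ ^ 2 * complexScorerHi_zero_mul_add_one hγ₁ hγ₂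
      - (1 - ω₃) * (complexScorerHi γ 0 * complexScorerHi (γ + 1) 0) * ω₃_pow_three
  · simp only [mul_zero]
    linear_combination -ω₃ * complexScorerHi_zero_mul_add_two hγ₁ hγ₂
      - complexScorerHi γ 0 * complexScorerHi (γ + 2) 0 * ω₃_pow_three
  · simp only [mul_zero]
    linear_combination complexScorerHi_add_one_zero_mul_add_two hγ₁ hγ₂
      - Real.Gamma (1 + γ) / π * ω₃ * Complex.exp (-(π * γ / 3) * I)
        * complexScorerHi (-1 - γ + 2) 0 * ω₃_pow_three

end

/-! ### Cauchy's theorem and Jordan's lemma on a sector -/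

/-- The integral of `z^μ g(z) dz` along the ray of angle `θ`, from `0` to radius `R`. The branch
of `z^μ` is the one with value `r^μ exp(iμθ)`. -/
noncomputable def radialIntegral (μ : ℝ) (g : ℂ → ℂ) (θ R : ℝ) : ℂ :=
  Complex.exp ((μ + 1) * (θ * I)) * ∫ r in (0 : ℝ)..R, (r ^ μ : ℝ) * g (circleMap 0 r θ)

/-- The integral of `z^μ g(z) dz` along the arc of radius `R` from angle `0` to angle `α`, with
the branch of `z^μ` used in `radialIntegral`. -/
noncomputable def arcIntegral (μ : ℝ) (g : ℂ → ℂ) (α R : ℝ) : ℂ :=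
  I * ∫ θ in (0 : ℝ)..α, (R ^ (μ + 1) : ℝ) * (Complex.exp ((μ + 1) * (θ * I))
    * g (circleMap 0 R θ))

section

variable {μ : ℝ} {g : ℂ → ℂ}

lemma intervalIntegrable_rpow_mul (hμ : -1 < μ) {h : ℝ → ℂ} (hh : Continuous h) (a b : ℝ) :
    IntervalIntegrable (fun r : ℝ => ((r ^ μ : ℝ) : ℂ) * h r) volume a b := by
  have hpow := intervalIntegral.intervalIntegrable_rpow' (a := a) (b := b) hμ
  exact IntervalIntegrable.mul_continuousOn ⟨hpow.1.ofReal, hpow.2.ofReal⟩ hh.continuousOn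

lemma continuous_radialIntegral (hμ : -1 < μ) (hg : Continuous g) (θ : ℝ) :
    Continuous (radialIntegral μ g θ) :=
  (intervalIntegral.continuous_primitive
    (intervalIntegrable_rpow_mul hμ (by unfold circleMap; fun_prop)) 0).const_mul _

lemma continuous_arcIntegral (hμ : -1 < μ) (hg : Continuous g) (α : ℝ) :
    Continuous (arcIntegral μ g α) := by
  have hpow : Continuous fun R : ℝ => R ^ (μ + 1) := Real.continuous_rpow_const (by linarith)
  refine (intervalIntegral.continuous_parametric_intervalIntegral_of_continuous' ?_ 0 α).const_mul _
  unfold circleMap Function.uncurry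
  fun_prop

lemma exp_ofReal_log_add_mul_I {r : ℝ} (hr : 0 < r) (θ : ℝ) :
    Complex.exp (Real.log r + θ * I) = circleMap 0 r θ := by
  rw [circleMap_zero, Complex.exp_add, ← Complex.ofReal_exp, Real.exp_log hr]

/-- In the logarithmic variable `w`, where `z = exp w`, the form `z^μ g(z) dz` has the entire
coefficient `exp((μ + 1) w) g(exp w)`, and rays become horizontal lines. -/
lemma integral_exp_mul_comp_exp (hμ : -1 < μ) (hg : Continuous g) (θ : ℝ) {a b : ℝ} (ha : 0 < a)
    (hb : 0 < b) :
    ∫ t in Real.log a..Real.log b,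
        Complex.exp ((μ + 1) * (t + θ * I)) * g (Complex.exp (t + θ * I))
      = radialIntegral μ g θ b - radialIntegral μ g θ a := by
  have hcont : Continuous fun r : ℝ => g (circleMap 0 r θ) := by unfold circleMap; fun_prop
  have hint := intervalIntegrable_rpow_mul hμ hcont
  have hsubst := intervalIntegral.integral_deriv_smul_comp' (a := Real.log a) (b := Real.log b)
    (f := Real.exp) (f' := Real.exp) (g := fun r : ℝ => ((r ^ μ : ℝ) : ℂ) * g (circleMap 0 r θ))
    (fun t _ => Real.hasDerivAt_exp t) Real.continuous_exp.continuousOn (by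
      rintro _ ⟨t, _, rfl⟩
      exact ((Complex.continuous_ofReal.continuousAt.comp (Real.continuousAt_rpow_const _ _
        (Or.inl (Real.exp_pos t).ne'))).mul hcont.continuousAt).continuousWithinAt)
  rw [Real.exp_log ha, Real.exp_log hb] at hsubst
  rw [radialIntegral, radialIntegral, ← mul_sub,
    intervalIntegral.integral_interval_sub_left (hint 0 b) (hint 0 a), ← hsubst,
    ← intervalIntegral.integral_const_mul]
  refine intervalIntegral.integral_congr fun t _ => ?_
  simp only [Function.comp_apply, Complex.real_smul, ← exp_ofReal_log_add_mul_I (Real.exp_pos t),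
    Real.log_exp, ← Real.exp_mul]
  push_cast
  rw [← mul_assoc, ← mul_assoc, ← Complex.exp_add, ← Complex.exp_add]
  ring_nf

lemma integral_exp_mul_comp_exp_vertical {R : ℝ} (hR : 0 < R) (α : ℝ) :
    I * ∫ θ in (0 : ℝ)..α, Complex.exp ((μ + 1) * (Real.log R + θ * I))
        * g (Complex.exp (Real.log R + θ * I))
      = arcIntegral μ g α R := by
  rw [arcIntegral]
  congr 1
  refine intervalIntegral.integral_congr fun θ _ => ?_
  simp only [exp_ofReal_log_add_mul_I hR, Real.rpow_def_of_pos hR, mul_add ((μ : ℂ) + 1),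
    Complex.exp_add]
  push_cast
  ring_nf

lemma radialIntegral_zero_add_arcIntegral (hμ : -1 < μ) (hg : Differentiable ℂ g) (α : ℝ) {R : ℝ}
    (hR : 0 ≤ R) :
    radialIntegral μ g 0 R + arcIntegral μ g α R = radialIntegral μ g α R := by
  set D : ℝ → ℂ := fun R => radialIntegral μ g 0 R + arcIntegral μ g α R - radialIntegral μ g α R
    with hD
  have hconst {a b : ℝ} (ha : 0 < a) (hb : 0 < b) : D a = D b := by
    have hdiff : Differentiable ℂ fun w : ℂ => Complex.exp ((μ + 1) * w) * g (Complex.exp w) := by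
      fun_prop
    have hrect := Complex.integral_boundary_rect_eq_zero_of_differentiableOn _
      (Real.log a + (0 : ℝ) * I) (Real.log b + α * I) hdiff.differentiableOn
    simp only [Complex.add_re, Complex.add_im, Complex.ofReal_re, Complex.ofReal_im,
      Complex.re_ofReal_mul, Complex.im_ofReal_mul, Complex.I_re, Complex.I_im, mul_zero, mul_one,
      add_zero, zero_add, smul_eq_mul] at hrect
    rw [integral_exp_mul_comp_exp hμ hg.continuous 0 ha hb,
      integral_exp_mul_comp_exp hμ hg.continuous α ha hb, integral_exp_mul_comp_exp_vertical ha,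
      integral_exp_mul_comp_exp_vertical hb] at hrect
    simp only [hD]
    linear_combination -hrect
  have hcont : Continuous D := ((continuous_radialIntegral hμ hg.continuous 0).add
    (continuous_arcIntegral hμ hg.continuous α)).sub (continuous_radialIntegral hμ hg.continuous α)
  have hD0 : D 0 = 0 := by
    have hpow : (0 : ℝ) ^ (μ + 1) = 0 := Real.zero_rpow (by linarith)
    simp [hD, radialIntegral, arcIntegral, hpow]
  rw [← sub_eq_zero]
  change D R = 0
  rcases hR.eq_or_lt with rfl | hR
  · exact hD0
  have hlim : Tendsto D (nhdsWithin 0 (Set.Ioi 0)) (nhds (D 0)) := hcont.continuousWithinAt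
  rw [← hD0]
  refine tendsto_nhds_unique (tendsto_const_nhds.congr' ?_) hlim
  filter_upwards [self_mem_nhdsWithin] with a ha using hconst hR ha

lemma norm_arcIntegral_le {α K R : ℝ} (hα : 0 ≤ α) (hK : 0 < K) (hR : 0 ≤ R)
    (hg : ∀ θ ∈ Set.Ioc 0 α, ‖g (circleMap 0 R θ)‖ ≤ Real.exp (-K * θ)) :
    ‖arcIntegral μ g α R‖ ≤ R ^ (μ + 1) / K := by
  have hexp : ∫ θ in (0 : ℝ)..α, Real.exp (-K * θ) = (1 - Real.exp (-K * α)) / K := by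
    rw [integral_comp_mul_left _ (neg_ne_zero.2 hK.ne'), integral_exp, mul_zero, Real.exp_zero,
      smul_eq_mul]
    field_simp
    ring
  have hnorm : ‖arcIntegral μ g α R‖ ≤ ∫ θ in (0 : ℝ)..α, R ^ (μ + 1) * Real.exp (-K * θ) := by
    rw [arcIntegral, norm_mul, Complex.norm_I, one_mul]
    refine intervalIntegral.norm_integral_le_of_norm_le hα (Eventually.of_forall fun θ hθ => ?_)
      (Continuous.intervalIntegrable (by fun_prop) _ _)
    rw [norm_mul, norm_mul, Complex.norm_real, Real.norm_of_nonneg (Real.rpow_nonneg hR _)]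
    have hunit : ‖Complex.exp ((μ + 1) * (θ * I))‖ = 1 := by
      rw [← mul_assoc]
      exact_mod_cast Complex.norm_exp_ofReal_mul_I ((μ + 1) * θ)
    rw [hunit, one_mul]
    exact mul_le_mul_of_nonneg_left (hg θ hθ) (Real.rpow_nonneg hR _)
  rw [intervalIntegral.integral_const_mul, hexp, ← mul_div_assoc] at hnorm
  refine hnorm.trans ?_
  gcongr
  exact mul_le_of_le_one_right (Real.rpow_nonneg hR _) (by linarith [Real.exp_pos (-K * α)])

end

/-! ### Rotation of the oscillatory integral -/

/-- The Airy kernel `exp(i(z³/3 + xz))`. -/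
noncomputable def airyKernel (x : ℝ) (z : ℂ) : ℂ :=
  Complex.exp (I * (z ^ 3 / 3 + x * z))

lemma differentiable_airyKernel (x : ℝ) : Differentiable ℂ (airyKernel x) := by
  unfold airyKernel
  fun_prop

lemma norm_airyKernel_circleMap (x R θ : ℝ) :
    ‖airyKernel x (circleMap 0 R θ)‖
      = Real.exp (-(R ^ 3 / 3 * Real.sin (3 * θ) + x * R * Real.sin θ)) := by
  have hcube : circleMap 0 R θ ^ 3 = circleMap 0 (R ^ 3) (3 * θ) := by
    rw [circleMap_zero, circleMap_zero, mul_pow, ← Complex.exp_nat_mul]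
    push_cast
    ring_nf
  have him (r φ : ℝ) : (circleMap 0 r φ).im = r * Real.sin φ := by
    rw [circleMap_zero, Complex.im_ofReal_mul, Complex.exp_ofReal_mul_I_im]
  rw [airyKernel, Complex.norm_exp, hcube, Complex.I_mul_re, Complex.add_im, Complex.div_ofNat_im,
    Complex.im_ofReal_mul, him, him]
  ring_nf

lemma norm_airyKernel_circleMap_le (x : ℝ) {R θ : ℝ} (hR : 0 ≤ R) (h₀ : 0 ≤ θ) (h₁ : θ ≤ π / 6) :
    ‖airyKernel x (circleMap 0 R θ)‖ ≤ Real.exp (-(R ^ 3 / 3 - |x| * R) * θ) := by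
  have hsin_three : θ ≤ Real.sin (3 * θ) := by
    have h := Real.mul_le_sin (x := 3 * θ) (by positivity) (by linarith)
    refine le_trans ?_ h
    rw [div_mul_eq_mul_div, le_div_iff₀ Real.pi_pos]
    nlinarith [Real.pi_lt_four]
  have hsin : -(x * R * Real.sin θ) ≤ |x| * R * θ := by
    calc -(x * R * Real.sin θ) ≤ |x * R * Real.sin θ| := neg_le_abs _
      _ = |x| * R * |Real.sin θ| := by rw [abs_mul, abs_mul, abs_of_nonneg hR]
      _ ≤ |x| * R * |θ| := mul_le_mul_of_nonneg_left Real.abs_sin_le_abs (by positivity)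
      _ = |x| * R * θ := by rw [abs_of_nonneg h₀]
  have hcubic : R ^ 3 / 3 * θ ≤ R ^ 3 / 3 * Real.sin (3 * θ) := by gcongr
  rw [norm_airyKernel_circleMap]
  gcongr
  linarith

lemma tendsto_arcIntegral_airyKernel {μ : ℝ} (hμ : μ < 2) (x : ℝ) :
    Tendsto (arcIntegral μ (airyKernel x) (π / 6)) atTop (nhds 0) := by
  refine squeeze_zero_norm' (a := fun R => 6 * R ^ (-(2 - μ))) ?_ ?_
  · filter_upwards [eventually_gt_atTop (0 : ℝ), eventually_ge_atTop (6 * |x| + 1)] with R hR hRx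
    have hK : R ^ 3 / 6 ≤ R ^ 3 / 3 - |x| * R := by
      have hsq : 6 * |x| ≤ R ^ 2 := by nlinarith [abs_nonneg x]
      nlinarith
    have hKpos : 0 < R ^ 3 / 6 := by positivity
    have hpow : R ^ (μ + 1) = R ^ (-(2 - μ)) * R ^ 3 := by
      rw [← Real.rpow_natCast R 3, ← Real.rpow_add hR]
      congr 1
      push_cast
      ring
    calc ‖arcIntegral μ (airyKernel x) (π / 6) R‖ ≤ R ^ (μ + 1) / (R ^ 3 / 6) :=
          norm_arcIntegral_le (by positivity) hKpos hR.le fun θ hθ =>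
            (norm_airyKernel_circleMap_le x hR.le hθ.1.le hθ.2).trans
              (Real.exp_le_exp.2 (mul_le_mul_of_nonneg_right (neg_le_neg hK) hθ.1.le))
      _ = 6 * R ^ (-(2 - μ)) := by
          rw [hpow]
          field_simp
  · simpa using (tendsto_rpow_neg_atTop (show 0 < 2 - μ by linarith)).const_mul 6

lemma rpow_mul_airyKernel_circleMap (μ x r : ℝ) :
    (r ^ μ : ℝ) * airyKernel x (circleMap 0 r (π / 6)) = scorerIntegrand μ (ω₃ * x) r := by
  have hcube : circleMap 0 r (π / 6) ^ 3 = r ^ 3 * I := by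
    rw [circleMap_zero, mul_pow, ← Complex.exp_nat_mul]
    congr 1
    refine (congrArg Complex.exp ?_).trans Complex.exp_pi_div_two_mul_I
    push_cast
    ring
  have hω : I * circleMap 0 r (π / 6) = r * ω₃ := by
    nth_rewrite 1 [circleMap_zero, ← Complex.exp_pi_div_two_mul_I]
    rw [mul_left_comm, ω₃, ← Complex.exp_add]
    push_cast
    ring_nf
  rw [scorerIntegrand, airyKernel, hcube]
  congr 2
  linear_combination (r : ℂ) ^ 3 / 3 * Complex.I_sq + x * hω

lemma tendsto_radialIntegral_airyKernel {μ : ℝ} (hμ₁ : -1 < μ) (hμ₂ : μ < 2) (x : ℝ) :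
    Tendsto (radialIntegral μ (airyKernel x) 0) atTop
      (nhds (Complex.exp ((μ + 1) * ((π / 6 : ℝ) * I)) * (π * complexScorerHi μ (ω₃ * x)))) := by
  have hrotated : Tendsto (radialIntegral μ (airyKernel x) (π / 6)) atTop
      (nhds (Complex.exp ((μ + 1) * ((π / 6 : ℝ) * I)) * (π * complexScorerHi μ (ω₃ * x)))) := by
    have h := (intervalIntegral_tendsto_integral_Ioi 0
      (integrableOn_scorerIntegrand (ω₃ * x) hμ₁) tendsto_id).const_mul
        (Complex.exp ((μ + 1) * ((π / 6 : ℝ) * I)))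
    have hπ : (π : ℂ) ≠ 0 := Complex.ofReal_ne_zero.2 Real.pi_ne_zero
    rw [complexScorerHi, ← mul_assoc (π : ℂ), mul_one_div_cancel hπ, one_mul]
    refine h.congr fun R => ?_
    simp only [radialIntegral, rpow_mul_airyKernel_circleMap, id]
  have h := hrotated.sub (tendsto_arcIntegral_airyKernel hμ₂ x)
  rw [sub_zero] at h
  refine h.congr' ?_
  filter_upwards [eventually_ge_atTop 0] with R hR
  rw [← radialIntegral_zero_add_arcIntegral hμ₁ (differentiable_airyKernel x) _ hR,
    add_sub_cancel_right]

/-! ### `Ai_μ + i Gi_μ` as an entire function -/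

/-- The entire function equal to `Ai_μ + i Gi_μ` on the real line. -/
noncomputable def complexAiry (μ : ℝ) (z : ℂ) : ℂ :=
  Complex.exp ((π / 6 - π * μ / 3) * I) * complexScorerHi μ (ω₃ * z)

section

variable {μ : ℝ}

lemma tendsto_integral_complexAiry (hμ₁ : -1 < μ) (hμ₂ : μ < 2) (x : ℝ) :
    Tendsto (fun R : ℝ => 1 / π * ∫ σ in (0 : ℝ)..R,
        (σ ^ μ : ℝ) * Complex.exp ((σ ^ 3 / 3 + x * σ - μ * π / 2 : ℝ) * I)) atTop
      (nhds (complexAiry μ x)) := by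
  have hπ : (π : ℂ) ≠ 0 := Complex.ofReal_ne_zero.2 Real.pi_ne_zero
  have hlim : 1 / π * Complex.exp (-(μ * π / 2) * I)
      * (Complex.exp ((μ + 1) * ((π / 6 : ℝ) * I)) * (π * complexScorerHi μ (ω₃ * x)))
      = complexAiry μ x := by
    rw [complexAiry, show (π / 6 - π * μ / 3 : ℂ) * I
      = -(μ * π / 2) * I + (μ + 1) * ((π / 6 : ℝ) * I) by push_cast; ring, Complex.exp_add]
    field_simp
  rw [← hlim]
  refine ((tendsto_radialIntegral_airyKernel hμ₁ hμ₂ x).const_mul _).congr fun R => ?_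
  rw [radialIntegral, Complex.ofReal_zero, zero_mul, mul_zero, Complex.exp_zero, one_mul, mul_assoc,
    ← intervalIntegral.integral_const_mul]
  congr 1
  refine intervalIntegral.integral_congr fun σ _ => ?_
  simp only [airyKernel, circleMap_zero, Complex.ofReal_zero, zero_mul, Complex.exp_zero, mul_one]
  rw [mul_left_comm, ← Complex.exp_add]
  push_cast
  ring_nf

lemma tendsto_integral_cos (hμ₁ : -1 < μ) (hμ₂ : μ < 2) (x : ℝ) :
    Tendsto (fun R : ℝ =>
        (1 / π) * ∫ σ in (0 : ℝ)..R, σ ^ μ * Real.cos (σ ^ 3 / 3 + x * σ - μ * π / 2)) atTop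
      (nhds (complexAiry μ x).re) := by
  refine ((Complex.continuous_re.tendsto _).comp
    (tendsto_integral_complexAiry hμ₁ hμ₂ x)).congr fun R => ?_
  have hint := intervalIntegrable_rpow_mul hμ₁ (h := fun σ : ℝ =>
    Complex.exp ((σ ^ 3 / 3 + x * σ - μ * π / 2 : ℝ) * I)) (by fun_prop) 0 R
  have h := Complex.reCLM.intervalIntegral_comp_comm hint
  simp only [Complex.reCLM_apply, Complex.re_ofReal_mul, Complex.exp_ofReal_mul_I_re] at h
  rw [Function.comp_apply, h, ← Complex.re_ofReal_mul]
  push_cast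
  rfl

lemma tendsto_integral_sin (hμ₁ : -1 < μ) (hμ₂ : μ < 2) (x : ℝ) :
    Tendsto (fun R : ℝ =>
        (1 / π) * ∫ σ in (0 : ℝ)..R, σ ^ μ * Real.sin (σ ^ 3 / 3 + x * σ - μ * π / 2)) atTop
      (nhds (complexAiry μ x).im) := by
  refine ((Complex.continuous_im.tendsto _).comp
    (tendsto_integral_complexAiry hμ₁ hμ₂ x)).congr fun R => ?_
  have hint := intervalIntegrable_rpow_mul hμ₁ (h := fun σ : ℝ =>
    Complex.exp ((σ ^ 3 / 3 + x * σ - μ * π / 2 : ℝ) * I)) (by fun_prop) 0 R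
  have h := Complex.imCLM.intervalIntegral_comp_comm hint
  simp only [Complex.imCLM_apply, Complex.im_ofReal_mul, Complex.exp_ofReal_mul_I_im] at h
  rw [Function.comp_apply, h, ← Complex.im_ofReal_mul]
  push_cast
  rfl

end

section

variable (γ : ℝ)

lemma complexAiry_eq (z : ℂ) :
    complexAiry γ z = Complex.exp (π / 6 * I) * Complex.exp (-(π * γ / 3) * I)
      * complexScorerHi γ (ω₃ * z) := by
  rw [complexAiry, ← Complex.exp_add]
  ring_nf

lemma complexAiry_add_one (z : ℂ) :
    complexAiry (γ + 1) z = -ω₃ * (Complex.exp (π / 6 * I) * Complex.exp (-(π * γ / 3) * I))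
      * complexScorerHi (γ + 1) (ω₃ * z) := by
  rw [complexAiry_eq, Complex.ofReal_add, Complex.ofReal_one, exp_neg_pi_mul_add_one_div_three]
  ring

lemma complexAiry_neg_one_sub (z : ℂ) :
    complexAiry (-1 - γ) z = I * Complex.exp (π * γ / 3 * I)
      * complexScorerHi (-1 - γ) (ω₃ * z) := by
  have harg : (π / 6 - π * (-1 - γ : ℝ) / 3 : ℂ) * I = π / 2 * I + π * γ / 3 * I := by
    push_cast
    ring
  rw [complexAiry, harg, Complex.exp_add, Complex.exp_pi_div_two_mul_I]

lemma exp_mul_exp_neg_mul_I (s : ℂ) : Complex.exp (s * I) * Complex.exp (-s * I) = 1 := by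
  rw [← Complex.exp_add, neg_mul, add_neg_cancel, Complex.exp_zero]

variable {γ}

theorem complexAiry_mul_complexScorerHi_add (hγ₁ : -1 < γ) (hγ₂ : γ < 0) (z : ℂ) :
    complexAiry γ z * complexScorerHi (γ + 1) z + complexAiry (γ + 1) z * complexScorerHi γ z
      = Real.Gamma (1 + γ) / π * (-Complex.exp (-(π * γ) * I) * complexAiry (-1 - γ) z
        + I * complexScorerHi (-1 - γ) z) := by
  have hW := complexScorerHi_wronskian hγ₁ hγ₂ z
  have hκ : Complex.exp (π / 6 * I) * ω₃ ^ 2 = -I := by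
    rw [ω₃, ← Complex.exp_nat_mul, ← Complex.exp_add, ← Complex.exp_neg_pi_div_two_mul_I,
      ← Complex.exp_periodic (-π / 2 * I)]
    push_cast
    ring_nf
  have hcube : Complex.exp (-(π * γ) * I) = Complex.exp (-(π * γ / 3) * I) ^ 3 := by
    rw [← Complex.exp_nat_mul]
    push_cast
    ring_nf
  have huv := exp_mul_exp_neg_mul_I (π * γ / 3)
  rw [complexAiry_add_one, complexAiry_eq, complexAiry_neg_one_sub, hcube]
  set u := Complex.exp (π * γ / 3 * I)
  set v := Complex.exp (-(π * γ / 3) * I)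
  set κ := Complex.exp (π / 6 * I)
  linear_combination κ * v * hW + (Real.Gamma (1 + γ) / π * v
    * (v * complexScorerHi (-1 - γ) (ω₃ * z) - u * complexScorerHi (-1 - γ) z)) * hκ
    + I * (Real.Gamma (1 + γ) / π) * (v ^ 2 * complexScorerHi (-1 - γ) (ω₃ * z)
      + complexScorerHi (-1 - γ) z) * huv

lemma conj_exp_ofReal_mul_I (t : ℝ) :
    conj (Complex.exp (t * I)) = Complex.exp (-t * I) := by
  rw [← Complex.exp_conj, map_mul, Complex.conj_ofReal, Complex.conj_I, mul_neg, neg_mul]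

/-- For real `x`, `ω₃ * (ω₃ * x)` is the conjugate of `ω₃ * x`. -/
lemma complexScorerHi_wronskian_conj (hγ₁ : -1 < γ) (hγ₂ : γ < 0) (x : ℝ) :
    conj (complexScorerHi γ (ω₃ * x)) * complexScorerHi (γ + 1) (ω₃ * x)
        - ω₃ * conj (complexScorerHi (γ + 1) (ω₃ * x)) * complexScorerHi γ (ω₃ * x)
      = ω₃ ^ 2 * (Real.Gamma (1 + γ) / π)
        * (Complex.exp (-(π * γ / 3) * I) * conj (complexScorerHi (-1 - γ) (ω₃ * x))
          - Complex.exp (π * γ / 3 * I) * complexScorerHi (-1 - γ) (ω₃ * x)) := by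
  have hconj : conj (ω₃ * x) = ω₃ * (ω₃ * x) := by
    rw [map_mul, conj_ω₃, Complex.conj_ofReal]
    ring
  simp only [← complexScorerHi_conj, hconj]
  exact complexScorerHi_wronskian hγ₁ hγ₂ (ω₃ * x)

lemma conj_complexAiry_mul_sub (hγ₁ : -1 < γ) (hγ₂ : γ < 0) (x : ℝ) :
    conj (complexAiry (γ + 1) x) * complexAiry γ x - complexAiry (γ + 1) x * conj (complexAiry γ x)
      = Real.Gamma (1 + γ) / π * (complexAiry (-1 - γ) x + conj (complexAiry (-1 - γ) x)) * I := by
  have hW := complexScorerHi_wronskian_conj hγ₁ hγ₂ x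
  have hκ := conj_exp_ofReal_mul_I (π / 6)
  have hu := conj_exp_ofReal_mul_I (π * γ / 3)
  have hv := conj_exp_ofReal_mul_I (-(π * γ / 3))
  push_cast [neg_neg] at hκ hu hv
  have huv := exp_mul_exp_neg_mul_I (π * γ / 3)
  have hκκ := exp_mul_exp_neg_mul_I (π / 6)
  simp only [complexAiry_add_one, complexAiry_eq γ, complexAiry_neg_one_sub, map_mul, map_neg, hκ,
    hu, hv, conj_ω₃, Complex.conj_I]
  set u := Complex.exp (π * γ / 3 * I)
  set v := Complex.exp (-(π * γ / 3) * I)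
  set κ := Complex.exp (π / 6 * I)
  set κ' := Complex.exp (-(π / 6) * I)
  set h₀ := complexScorerHi γ (ω₃ * x)
  set h₁ := complexScorerHi (γ + 1) (ω₃ * x)
  set h := complexScorerHi (-1 - γ) (ω₃ * x)
  linear_combination ω₃ * hW + (Real.Gamma (1 + γ) / π * (v * conj h - u * h)) * ω₃_pow_three
    + (ω₃ * conj h₀ * h₁ - ω₃ ^ 2 * conj h₁ * h₀) * (κ * κ' * huv + hκκ)
    - (Real.Gamma (1 + γ) / π * (u * h - v * conj h)) * Complex.I_sq

theorem im_conj_complexAiry_mul (hγ₁ : -1 < γ) (hγ₂ : γ < 0) (x : ℝ) :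
    (conj (complexAiry (γ + 1) x) * complexAiry γ x).im
      = Real.Gamma (1 + γ) / π * (complexAiry (-1 - γ) x).re := by
  have h := congrArg Complex.im (conj_complexAiry_mul_sub hγ₁ hγ₂ x)
  rw [Complex.add_conj, ← Complex.ofReal_div, ← Complex.ofReal_mul, Complex.im_ofReal_mul,
    Complex.I_im, mul_one, Complex.sub_im] at h
  simp only [Complex.mul_im, Complex.conj_re, Complex.conj_im] at h ⊢
  linarith

end

/-- Wronskian-type identities between the generalized Airy function `Ai_γ`,
defined by `Ai_γ(x) = (1/π)·lim_{R→∞} ∫_0^R σ^γ cos(σ³/3 + xσ - γπ/2) dσ`,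
the generalized Scorer function `Gi_γ`, defined by
`Gi_γ(x) = (1/π)·lim_{R→∞} ∫_0^R σ^γ sin(σ³/3 + xσ - γπ/2) dσ`,
and `Hi_γ`. -/
theorem wronskian_identities (γ : ℝ) (hγ₁ : -1 < γ) (hγ₂ : γ < 0)
    (Ai Gi : ℝ → ℝ → ℝ)
    (hAi : ∀ μ : ℝ, -1 < μ → μ < 2 → ∀ x : ℝ,
      Tendsto (fun R : ℝ =>
          (1 / π) * ∫ σ in (0 : ℝ)..R, σ ^ μ * Real.cos (σ ^ 3 / 3 + x * σ - μ * π / 2))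
        atTop (nhds (Ai μ x)))
    (hGi : ∀ μ : ℝ, -1 < μ → μ < 2 → ∀ x : ℝ,
      Tendsto (fun R : ℝ =>
          (1 / π) * ∫ σ in (0 : ℝ)..R, σ ^ μ * Real.sin (σ ^ 3 / 3 + x * σ - μ * π / 2))
        atTop (nhds (Gi μ x))) :
    ∀ x : ℝ,
      (Ai (γ + 1) x * Gi γ x - Ai γ x * Gi (γ + 1) x
          = (Real.Gamma (1 + γ) / π) * Ai (-1 - γ) x) ∧
      (Ai γ x * scorerHi (γ + 1) x + Ai (γ + 1) x * scorerHi γ x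
          = (Real.Gamma (1 + γ) / π)
            * (-Real.cos (π * γ) * Ai (-1 - γ) x - Real.sin (π * γ) * Gi (-1 - γ) x)) ∧
      (Gi γ x * scorerHi (γ + 1) x + Gi (γ + 1) x * scorerHi γ x
          = (Real.Gamma (1 + γ) / π)
            * (Real.sin (π * γ) * Ai (-1 - γ) x - Real.cos (π * γ) * Gi (-1 - γ) x
                + scorerHi (-1 - γ) x)) := by
  intro x
  have hA {μ : ℝ} (h₁ : -1 < μ) (h₂ : μ < 2) : Ai μ x = (complexAiry μ x).re :=
    tendsto_nhds_unique (hAi μ h₁ h₂ x) (tendsto_integral_cos h₁ h₂ x)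
  have hG {μ : ℝ} (h₁ : -1 < μ) (h₂ : μ < 2) : Gi μ x = (complexAiry μ x).im :=
    tendsto_nhds_unique (hGi μ h₁ h₂ x) (tendsto_integral_sin h₁ h₂ x)
  rw [hA hγ₁ (by linarith), hA (μ := γ + 1) (by linarith) (by linarith),
    hA (μ := -1 - γ) (by linarith) (by linarith), hG hγ₁ (by linarith),
    hG (μ := γ + 1) (by linarith) (by linarith), hG (μ := -1 - γ) (by linarith) (by linarith)]
  have hairy := im_conj_complexAiry_mul hγ₁ hγ₂ x
  have hscorer := complexAiry_mul_complexScorerHi_add hγ₁ hγ₂ x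
  simp only [complexScorerHi_ofReal] at hscorer
  rw [← Complex.ofReal_div, ← Complex.ofReal_mul π γ, ← Complex.ofReal_neg] at hscorer
  have hre := congrArg Complex.re hscorer
  have him := congrArg Complex.im hscorer
  simp only [Complex.add_re, Complex.add_im, Complex.mul_re, Complex.mul_im, Complex.neg_re,
    Complex.neg_im, Complex.ofReal_re, Complex.ofReal_im, Complex.exp_ofReal_mul_I_re,
    Complex.exp_ofReal_mul_I_im, Complex.I_re, Complex.I_im, Complex.conj_re, Complex.conj_im,
    Real.cos_neg, Real.sin_neg] at hairy hre him
  exact ⟨by linarith, by linarith, by linarith⟩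
end
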